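/- arXiv:math/9904123 — 3 statements merged into one kernel-verified Lean document; each statement's English description precedes it below -/
import Mathlib

section
/- Let γ : ℝ → ℝ³ be a simple closed spherical curve of length L, parametrized by arclength, with curvature κ(s) = ‖γ''(s)‖. If there exists a nonzero smooth L-periodic function f : ℝ → ℝ with ∫₀^L (4 f'(s)² + κ(s)² f(s)²) ds = (4π²/L²) ∫₀^L f(s)² ds (i.e., equality holds in the lower bound 4π²/L² ≤ μ₁(−4 d²/ds² + κ²)), then the curvature κ is constant. -/
open Real MeasureTheory

/-!
Let `T = γ'` be the unit tangent and `K` the total curvature of `γ`. Rotate `f` through the phase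
`θ = (π / K) ∫ κ`, which grows by `π` along one period: `f cos θ` and `f sin θ` are antiperiodic, so
Wirtinger's inequality applies to both, and their sum reads
`(π / L)² ∫ f² ≤ ∫ (f'² + (π / K)² κ² f²)`. Compared with the assumption this forces
`K ≤ 2π`. By Fenchel's theorem `K ≥ 2π`, and in the equality case `T` traverses a great circle: the
angle between `T a` and `T b` is the curvature accumulated from `a` to `b`. So `γ` is a planar
curve, and a planar curve on a sphere of centre `c` has constant curvature, since
`⟪γ - c, T'⟫ = -1` says that `-1 / κ` is the normal component of the position vector `γ - c`, whose
derivative vanishes.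
-/

section General

open Set Filter Topology InnerProductGeometry
open scoped RealInnerProductSpace

/-! ### Wirtinger's inequality -/

section Wirtinger

-- Picone's identity: `(u' + φ u)² = u'² - q u² + (φ u²)'`.
theorem integral_mul_sq_le_of_riccati {a b : ℝ} (hab : a ≤ b) {u φ q : ℝ → ℝ}
    (hu : ContDiff ℝ 1 u) (hq : ContinuousOn q (Icc a b))
    (hφ : ∀ s ∈ Icc a b, HasDerivAt φ (q s + φ s ^ 2) s) (ha : u a = 0) (hb : u b = 0) :
    ∫ s in a..b, q s * u s ^ 2 ≤ ∫ s in a..b, deriv u s ^ 2 := by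
  rw [← uIcc_of_le hab] at hq hφ
  have hu' : Continuous (deriv u) := hu.continuous_deriv_one
  have hφc : ContinuousOn φ (uIcc a b) := HasDerivAt.continuousOn hφ
  have hpot : IntervalIntegrable (fun s ↦ q s * u s ^ 2) volume a b :=
    (hq.mul (hu.continuous.pow 2).continuousOn).intervalIntegrable
  have hkin : IntervalIntegrable (fun s ↦ deriv u s ^ 2) volume a b :=
    (hu'.pow 2).intervalIntegrable _ _
  have hsq : IntervalIntegrable (fun s ↦ (deriv u s + φ s * u s) ^ 2) volume a b :=
    ((hu'.continuousOn.add (hφc.mul hu.continuous.continuousOn)).pow 2).intervalIntegrable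
  have hderiv : ∀ s ∈ uIcc a b, HasDerivAt (fun s ↦ φ s * u s ^ 2)
      ((deriv u s + φ s * u s) ^ 2 - (deriv u s ^ 2 - q s * u s ^ 2)) s := fun s hs ↦
    ((hφ s hs).mul ((hu.differentiable_one s).hasDerivAt.pow 2)).congr_deriv (by simp; ring)
  have hFTC := intervalIntegral.integral_eq_sub_of_hasDerivAt hderiv (hsq.sub (hkin.sub hpot))
  rw [intervalIntegral.integral_sub hsq (hkin.sub hpot),
    intervalIntegral.integral_sub hkin hpot, ha, hb] at hFTC
  have hnonneg : 0 ≤ ∫ s in a..b, (deriv u s + φ s * u s) ^ 2 :=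
    intervalIntegral.integral_nonneg hab fun s _ ↦ sq_nonneg _
  linarith

theorem hasDerivAt_mul_tan {η m s : ℝ} (hs : cos (η * (s - m)) ≠ 0) :
    HasDerivAt (fun s ↦ η * tan (η * (s - m))) (η ^ 2 + (η * tan (η * (s - m))) ^ 2) s := by
  have hlin : HasDerivAt (fun s ↦ η * (s - m)) η s := by
    simpa using ((hasDerivAt_id s).sub_const m).const_mul η
  refine (((hasDerivAt_tan hs).comp s hlin).const_mul η).congr_deriv ?_
  rw [one_div, inv_eq_one_div, ← one_add_tan_sq_mul_cos_sq_eq_one hs]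
  field_simp

theorem wirtinger_inequality_of_eq_zero {a b : ℝ} (hab : a < b) {u : ℝ → ℝ}
    (hu : ContDiff ℝ 1 u) (ha : u a = 0) (hb : u b = 0) :
    (π / (b - a)) ^ 2 * ∫ s in a..b, u s ^ 2 ≤ ∫ s in a..b, deriv u s ^ 2 := by
  have hpos : 0 < π / (b - a) := div_pos pi_pos (sub_pos.2 hab)
  have hsub : ∀ η ∈ Ioo 0 (π / (b - a)),
      η ^ 2 * ∫ s in a..b, u s ^ 2 ≤ ∫ s in a..b, deriv u s ^ 2 := by
    rintro η ⟨hη, hη'⟩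
    rw [lt_div_iff₀ (sub_pos.2 hab)] at hη'
    rw [← intervalIntegral.integral_const_mul]
    refine integral_mul_sq_le_of_riccati (φ := fun s ↦ η * tan (η * (s - (a + b) / 2))) hab.le hu
      continuousOn_const (fun s hs ↦ hasDerivAt_mul_tan (cos_pos_of_mem_Ioo ?_).ne') ha hb
    constructor <;> nlinarith [hs.1, hs.2]
  -- At `η = π / (b - a)` itself the tangent blows up at the end points.
  refine ContinuousWithinAt.closure_le (s := Ioo 0 (π / (b - a)))
    (f := fun η ↦ η ^ 2 * ∫ s in a..b, u s ^ 2) ?_ (by fun_prop) continuousWithinAt_const hsub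
  rw [closure_Ioo hpos.ne]
  exact right_mem_Icc.2 hpos.le

theorem exists_eq_zero_of_antiperiodic {u : ℝ → ℝ} {L : ℝ} (hu : Continuous u)
    (hanti : Function.Antiperiodic u L) : ∃ c, u c = 0 := by
  have hL : u L = -u 0 := by simpa using hanti 0
  rcases le_total (u 0) 0 with h | h
  · exact mem_range_of_exists_le_of_exists_ge hu ⟨0, h⟩ ⟨L, by linarith⟩
  · exact mem_range_of_exists_le_of_exists_ge hu ⟨L, by linarith⟩ ⟨0, h⟩

theorem antiperiodic_deriv {u : ℝ → ℝ} {L : ℝ} (hanti : Function.Antiperiodic u L) :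
    Function.Antiperiodic (deriv u) L := fun s ↦ by
  rw [← deriv_comp_add_const, hanti.funext, deriv.neg]

theorem periodic_sq_of_antiperiodic {u : ℝ → ℝ} {L : ℝ} (hanti : Function.Antiperiodic u L) :
    Function.Periodic (fun s ↦ u s ^ 2) L := fun s ↦ by
  simp only [hanti s, neg_sq]

theorem wirtinger_inequality_of_antiperiodic {L : ℝ} (hL : 0 < L) {u : ℝ → ℝ}
    (hu : ContDiff ℝ 1 u) (hanti : Function.Antiperiodic u L) :
    (π / L) ^ 2 * ∫ s in (0 : ℝ)..L, u s ^ 2 ≤ ∫ s in (0 : ℝ)..L, deriv u s ^ 2 := by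
  obtain ⟨c, hc⟩ := exists_eq_zero_of_antiperiodic hu.continuous hanti
  have hshift := (periodic_sq_of_antiperiodic hanti).intervalIntegral_add_eq 0 c
  have hshift' := (periodic_sq_of_antiperiodic (antiperiodic_deriv hanti)).intervalIntegral_add_eq
    0 c
  rw [zero_add] at hshift hshift'
  rw [hshift, hshift']
  simpa using wirtinger_inequality_of_eq_zero (lt_add_of_pos_right c hL) hu hc
    (by rw [hanti c, hc, neg_zero])

-- The two antiperiodic functions are the components of `f e^{iθ}`, and
-- `|(f e^{iθ})'|² = f'² + θ'² f²`.
theorem wirtinger_inequality_of_phase {L : ℝ} (hL : 0 < L) {f θ : ℝ → ℝ} (hf : ContDiff ℝ 1 f)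
    (hfper : Function.Periodic f L) (hθ : ContDiff ℝ 1 θ) (hθper : ∀ s, θ (s + L) = θ s + π) :
    (π / L) ^ 2 * ∫ s in (0 : ℝ)..L, f s ^ 2 ≤
      ∫ s in (0 : ℝ)..L, (deriv f s ^ 2 + deriv θ s ^ 2 * f s ^ 2) := by
  have hcos := wirtinger_inequality_of_antiperiodic hL (hf.mul hθ.cos)
    fun s ↦ by simp [hfper s, hθper]
  have hsin := wirtinger_inequality_of_antiperiodic hL (hf.mul hθ.sin)
    fun s ↦ by simp [hfper s, hθper]
  have hsum := add_le_add hcos hsin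
  have hfc := hf.continuous
  have hθc := hθ.continuous
  have hf'c := (hf.mul hθ.cos).continuous_deriv_one
  have hf's := (hf.mul hθ.sin).continuous_deriv_one
  rw [← mul_add, ← intervalIntegral.integral_add, ← intervalIntegral.integral_add] at hsum
  · refine hsum.trans_eq' ?_ |>.trans_eq ?_
    · congr 2 with s
      linear_combination f s ^ 2 * sin_sq_add_cos_sq (θ s)
    · congr 1 with s
      have hfs := (hf.differentiable_one s).hasDerivAt
      have hθs := (hθ.differentiable_one s).hasDerivAt
      rw [(hfs.fun_mul hθs.cos).deriv, (hfs.fun_mul hθs.sin).deriv]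
      linear_combination (deriv f s ^ 2 + deriv θ s ^ 2 * f s ^ 2) * sin_sq_add_cos_sq (θ s)
  all_goals exact Continuous.intervalIntegrable (by fun_prop) _ _

theorem integral_deriv_sq_mul_sq_pos {L K : ℝ} (hL : 0 < L) {f A : ℝ → ℝ} (hf : Continuous f)
    (hfper : Function.Periodic f L) (hA : ContDiff ℝ 1 A) (hAper : ∀ s, A (s + L) = A s + K)
    (hne : ∃ s, deriv A s * f s ≠ 0) : 0 < ∫ s in (0 : ℝ)..L, deriv A s ^ 2 * f s ^ 2 := by
  have hA'per : Function.Periodic (deriv A) L := fun s ↦ by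
    rw [← deriv_comp_add_const, funext hAper, deriv_add_const]
  obtain ⟨s, hs⟩ := hne
  obtain ⟨t, ht, hst⟩ := (hA'per.mul hfper).exists_mem_Ico₀ hL s
  have : Continuous (deriv A) := hA.continuous_deriv_one
  refine intervalIntegral.integral_pos hL (by fun_prop) (fun _ _ ↦ by positivity)
    ⟨t, Ico_subset_Icc_self ht, ?_⟩
  rw [← mul_pow]
  exact sq_pos_of_ne_zero (hst.symm.trans_ne hs)

theorem increment_le_two_pi_of_integral_le {L K : ℝ} (hL : 0 < L) {f A : ℝ → ℝ}
    (hf : ContDiff ℝ 1 f) (hfper : Function.Periodic f L) (hA : ContDiff ℝ 1 A)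
    (hAper : ∀ s, A (s + L) = A s + K) (hne : ∃ s, deriv A s * f s ≠ 0)
    (hle : ∫ s in (0 : ℝ)..L, (4 * deriv f s ^ 2 + deriv A s ^ 2 * f s ^ 2) ≤
      4 * π ^ 2 / L ^ 2 * ∫ s in (0 : ℝ)..L, f s ^ 2) : K ≤ 2 * π := by
  by_contra! hK
  have hKpos : 0 < K := by linarith [pi_pos]
  have hfc := hf.continuous
  have hf' := hf.continuous_deriv_one
  have hA' := hA.continuous_deriv_one
  have hphase := wirtinger_inequality_of_phase hL hf hfper (contDiff_const.mul hA) fun s ↦ by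
    simp only [hAper]; exact (by field_simp : π / K * (A s + K) = π / K * A s + π)
  have hphase' : (π / L) ^ 2 * ∫ s in (0 : ℝ)..L, f s ^ 2 ≤
      (∫ s in (0 : ℝ)..L, deriv f s ^ 2) +
        (π / K) ^ 2 * ∫ s in (0 : ℝ)..L, deriv A s ^ 2 * f s ^ 2 := by
    rw [← intervalIntegral.integral_const_mul ((π / K) ^ 2), ← intervalIntegral.integral_add]
    · simpa [mul_pow, mul_assoc] using hphase
    all_goals exact Continuous.intervalIntegrable (by fun_prop) _ _
  rw [intervalIntegral.integral_add, intervalIntegral.integral_const_mul] at hle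
  · have hpos := integral_deriv_sq_mul_sq_pos hL hfc hfper hA hAper hne
    have hratio : (π / K) ^ 2 < (1 / 2) ^ 2 :=
      pow_lt_pow_left₀ ((div_lt_iff₀ hKpos).2 (by linarith)) (by positivity) two_ne_zero
    have hscale : 4 * π ^ 2 / L ^ 2 = 4 * (π / L) ^ 2 := by ring
    rw [hscale] at hle
    nlinarith
  all_goals exact Continuous.intervalIntegrable (by fun_prop) _ _

end Wirtinger

/-! ### Length of a curve on the unit sphere -/

section Turning

variable {E : Type*} [NormedAddCommGroup E]

/-- The signed length of the curve `T` between the parameters `0` and `s`. When `T` is the unit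
tangent of a curve parametrized by arclength, this is the total curvature of that curve up to `s`,
so that its value at the period is the total curvature of a closed curve. -/
noncomputable def turning [NormedSpace ℝ E] (T : ℝ → E) (s : ℝ) : ℝ :=
  ∫ t in (0 : ℝ)..s, ‖deriv T t‖

section NormedSpace

variable [NormedSpace ℝ E] {T : ℝ → E} {L : ℝ}

theorem hasDerivAt_turning (hT : ContDiff ℝ 1 T) (s : ℝ) :
    HasDerivAt (turning T) ‖deriv T s‖ s :=
  (hT.continuous_deriv_one.norm.integral_hasStrictDerivAt 0 s).hasDerivAt

theorem contDiff_turning (hT : ContDiff ℝ 1 T) : ContDiff ℝ 1 (turning T) := by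
  refine contDiff_one_iff_deriv.2 ⟨fun s ↦ (hasDerivAt_turning hT s).differentiableAt, ?_⟩
  rw [funext fun s ↦ (hasDerivAt_turning hT s).deriv]
  exact hT.continuous_deriv_one.norm

theorem monotone_turning (hT : ContDiff ℝ 1 T) : Monotone (turning T) :=
  monotone_of_hasDerivAt_nonneg (hasDerivAt_turning hT) fun _ ↦ norm_nonneg _

theorem periodic_deriv (hper : Function.Periodic T L) : Function.Periodic (deriv T) L := fun s ↦ by
  rw [← deriv_comp_add_const, hper.funext]

theorem turning_add_period (hT : ContDiff ℝ 1 T) (hper : Function.Periodic T L) (s : ℝ) :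
    turning T (s + L) = turning T s + turning T L := by
  simpa [turning] using ((periodic_deriv hper).comp norm).intervalIntegral_add_eq_add 0 s
    fun _ _ ↦ hT.continuous_deriv_one.norm.intervalIntegrable _ _

theorem surjective_turning (hT : ContDiff ℝ 1 T) (hper : Function.Periodic T L) (hL : 0 < L)
    (hpos : 0 < turning T L) : Function.Surjective (turning T) :=
  have hper' := (periodic_deriv hper).comp norm
  (contDiff_turning hT).continuous.surjective (hper'.tendsto_atTop_intervalIntegral_of_pos hpos hL)
    (hper'.tendsto_atBot_intervalIntegral_of_pos hpos hL)

end NormedSpace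

variable [InnerProductSpace ℝ E] {T : ℝ → E} {L : ℝ}

theorem angle_eq_two_mul_arcsin_of_norm_eq_one {x y : E} (hx : ‖x‖ = 1) (hy : ‖y‖ = 1) :
    angle x y = 2 * arcsin (‖y - x‖ / 2) := by
  have hsin : sin (angle x y / 2) = ‖y - x‖ / 2 := by
    have hchord : ‖y - x‖ ^ 2 = 2 - 2 * cos (angle x y) := by
      rw [norm_sub_sq_real, real_inner_comm, inner_eq_cos_angle_of_norm_eq_one hx hy, hx, hy]
      ring
    rw [sin_half_eq_sqrt (angle_nonneg x y) (by linarith [angle_le_pi x y, pi_pos]),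
      sqrt_eq_iff_eq_sq (by linarith [cos_le_one (angle x y)]) (by positivity)]
    linarith
  rw [arcsin_eq_of_sin_eq hsin ⟨by linarith [angle_nonneg x y, pi_pos],
    by linarith [angle_le_pi x y]⟩]
  ring

theorem tendsto_angle_div_sub (hT : Differentiable ℝ T) (hunit : ∀ s, ‖T s‖ = 1) (s : ℝ) :
    Tendsto (fun t ↦ angle (T s) (T t) / (t - s)) (𝓝[>] s) (𝓝 ‖deriv T s‖) := by
  have harcsin : ContinuousAt (dslope arcsin 0) 0 :=
    continuousAt_dslope_same.2 (differentiableAt_arcsin.2 (by norm_num))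
  have hquot : Tendsto (fun t ↦ dslope arcsin 0 (‖T t - T s‖ / 2)) (𝓝[>] s) (𝓝 1) := by
    have hchord : ContinuousAt (fun t ↦ ‖T t - T s‖ / 2) s :=
      ((hT.continuous.sub continuous_const).norm.div_const 2).continuousAt
    have hcomp := ContinuousAt.comp_of_eq harcsin hchord (by simp)
    simpa [dslope_same, deriv_arcsin, Function.comp_def] using
      hcomp.tendsto.mono_left nhdsWithin_le_nhds
  have hslope : Tendsto (fun t ↦ ‖slope T s t‖) (𝓝[>] s) (𝓝 ‖deriv T s‖) :=
    ((hasDerivWithinAt_iff_tendsto_slope' self_notMem_Ioi).1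
      (hT s).hasDerivAt.hasDerivWithinAt).norm
  refine (by simpa using hslope.mul hquot : Tendsto _ _ _).congr' ?_
  filter_upwards [self_mem_nhdsWithin] with t ht
  have hts : 0 < t - s := sub_pos.2 ht
  have hmul := sub_smul_dslope arcsin 0 (‖T t - T s‖ / 2)
  rw [angle_eq_two_mul_arcsin_of_norm_eq_one (hunit s) (hunit t), slope_def_module, norm_smul,
    norm_inv, norm_of_nonneg hts.le]
  simp only [sub_zero, arcsin_zero, smul_eq_mul] at hmul
  rw [← hmul]
  field_simp

theorem angle_le_turning_sub (hT : ContDiff ℝ 1 T) (hunit : ∀ s, ‖T s‖ = 1) {a b : ℝ}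
    (hab : a ≤ b) : angle (T a) (T b) ≤ turning T b - turning T a := by
  have hcont : Continuous fun s ↦ angle (T a) (T s) := by
    simp only [angle_eq_two_mul_arcsin_of_norm_eq_one (hunit a) (hunit _)]
    have := hT.continuous
    fun_prop
  have hderiv (s : ℝ) : HasDerivAt (fun s ↦ turning T s - turning T a) ‖deriv T s‖ s :=
    (hasDerivAt_turning hT s).sub_const _
  refine image_le_of_liminf_slope_right_le_deriv_boundary hcont.continuousOn
    (by simp [angle_self (norm_ne_zero_iff.1 (hunit a ▸ one_ne_zero))])
    (HasDerivAt.continuousOn fun s _ ↦ hderiv s) (fun s _ ↦ (hderiv s).hasDerivWithinAt)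
    (fun s _ r hr ↦ Eventually.frequently ?_) (right_mem_Icc.2 hab)
  filter_upwards [(tendsto_angle_div_sub hT.differentiable_one hunit s).eventually_lt_const hr,
    self_mem_nhdsWithin] with t ht hst
  refine lt_of_le_of_lt ?_ ht
  rw [slope_def_field]
  gcongr
  · exact (sub_pos.2 hst).le
  · linarith [angle_le_angle_add_angle (T a) (T s) (T t)]

theorem cos_turning_sub_le_inner (hT : ContDiff ℝ 1 T) (hunit : ∀ s, ‖T s‖ = 1) {a b : ℝ}
    (hab : a ≤ b) (hπ : turning T b - turning T a ≤ π) :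
    cos (turning T b - turning T a) ≤ ⟪T a, T b⟫ := by
  rw [inner_eq_cos_angle_of_norm_eq_one (hunit a) (hunit b)]
  exact cos_le_cos_of_nonneg_of_le_pi (angle_nonneg _ _) hπ (angle_le_turning_sub hT hunit hab)

end Turning

/-! ### Fenchel's theorem and its equality case -/

section Fenchel

theorem deriv_eq_zero_of_nonneg_of_endpoints_eq {h : ℝ → ℝ} (hh : ContDiff ℝ 1 h) {a b : ℝ}
    (hab : a < b) (hnonneg : ∀ s ∈ Icc a b, 0 ≤ deriv h s) (heq : h a = h b) :
    ∀ s ∈ Icc a b, deriv h s = 0 := by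
  intro s hs
  by_contra hne
  have hpos : 0 < ∫ t in a..b, deriv h t :=
    intervalIntegral.integral_pos hab hh.continuous_deriv_one.continuousOn
      (fun t ht ↦ hnonneg t (Ioc_subset_Icc_self ht)) ⟨s, hs, (hnonneg s hs).lt_of_ne' hne⟩
  rw [intervalIntegral.integral_deriv_eq_sub (fun t _ ↦ hh.differentiable_one t)
    (hh.continuous_deriv_one.intervalIntegrable _ _), heq, sub_self] at hpos
  exact hpos.false

theorem cos_add_cos_nonneg {x y : ℝ} (hx : 0 ≤ x) (hy : 0 ≤ y) (hxy : x + y ≤ π) :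
    0 ≤ cos x + cos y := by
  have := cos_le_cos_of_nonneg_of_le_pi hx (y := π - y) (by linarith) (by linarith)
  rw [cos_pi_sub] at this
  linarith

variable {E : Type*} [NormedAddCommGroup E] [InnerProductSpace ℝ E] {γ : ℝ → E} {L : ℝ}

theorem inner_deriv_eq_zero_of_nonneg (hγ : ContDiff ℝ 1 γ) (hL : 0 < L)
    (hper : Function.Periodic γ L) {v : E} {a : ℝ}
    (hnonneg : ∀ s ∈ Icc a (a + L), 0 ≤ ⟪v, deriv γ s⟫) :
    ∀ s ∈ Icc a (a + L), ⟪v, deriv γ s⟫ = 0 := by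
  have hderiv (s : ℝ) : deriv (fun t ↦ ⟪v, γ t⟫) s = ⟪v, deriv γ s⟫ := by
    simpa using ((hasDerivAt_const s v).inner ℝ (hγ.differentiable_one s).hasDerivAt).deriv
  simp only [← hderiv] at hnonneg ⊢
  exact deriv_eq_zero_of_nonneg_of_endpoints_eq (contDiff_const.inner ℝ hγ)
    (lt_add_of_pos_right a hL) hnonneg (by simp only [hper a])

theorem cos_add_cos_le_inner_add {T : ℝ → E} (hT : ContDiff ℝ 1 T) (hunit : ∀ s, ‖T s‖ = 1)
    {a m s : ℝ} (hπ : turning T m - turning T a ≤ π) (hs : s ∈ Icc a m) :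
    cos (turning T s - turning T a) + cos (turning T m - turning T s) ≤ ⟪T a + T m, T s⟫ := by
  have has := monotone_turning hT hs.1
  have hsm := monotone_turning hT hs.2
  rw [inner_add_left, real_inner_comm _ (T m)]
  exact add_le_add (cos_turning_sub_le_inner hT hunit hs.1 (by linarith))
    (cos_turning_sub_le_inner hT hunit hs.2 (by linarith))

theorem inner_add_nonneg {T : ℝ → E} (hT : ContDiff ℝ 1 T) (hunit : ∀ s, ‖T s‖ = 1)
    {a m s : ℝ} (hπ : turning T m - turning T a ≤ π) (hs : s ∈ Icc a m) :
    0 ≤ ⟪T a + T m, T s⟫ :=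
  (cos_add_cos_nonneg (sub_nonneg.2 (monotone_turning hT hs.1))
    (sub_nonneg.2 (monotone_turning hT hs.2)) (by linarith)).trans
    (cos_add_cos_le_inner_add hT hunit hπ hs)

theorem exists_turning_eq_add_half {T : ℝ → E} (hT : ContDiff ℝ 1 T) (hL : 0 < L)
    (hper : Function.Periodic T L) {a b : ℝ} (hb : b ≤ a + L)
    (hab : turning T b ≤ turning T a + turning T L / 2) :
    ∃ m ∈ Icc b (a + L), turning T m = turning T a + turning T L / 2 := by
  refine intermediate_value_Icc hb (contDiff_turning hT).continuous.continuousOn ⟨hab, ?_⟩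
  have hnonneg := monotone_turning hT (le_add_of_nonneg_right hL.le : a ≤ a + L)
  rw [turning_add_period hT hper] at hnonneg ⊢
  linarith

-- `a` and `m` cut the tangent curve into two arcs of equal length at most `π`, both lying in the
-- closed half-space with inner normal `γ' a + γ' m`.
theorem inner_add_eq_zero_of_turning_le (hγ : ContDiff ℝ 2 γ) (hL : 0 < L)
    (hper : Function.Periodic γ L) (hunit : ∀ s, ‖deriv γ s‖ = 1)
    (hK : turning (deriv γ) L ≤ 2 * π) {a m : ℝ}
    (hm : turning (deriv γ) m = turning (deriv γ) a + turning (deriv γ) L / 2) :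
    ∀ s ∈ Icc a (a + L), ⟪deriv γ a + deriv γ m, deriv γ s⟫ = 0 := by
  have hT : ContDiff ℝ 1 (deriv γ) := hγ.deriv'
  refine inner_deriv_eq_zero_of_nonneg (hγ.of_le one_le_two) hL hper fun s hs ↦ ?_
  rcases le_total s m with hsm | hms
  · exact inner_add_nonneg hT hunit (by linarith) ⟨hs.1, hsm⟩
  · rw [add_comm, ← periodic_deriv hper a]
    refine inner_add_nonneg hT hunit ?_ ⟨hms, hs.2⟩
    rw [turning_add_period hT (periodic_deriv hper)]
    linarith

theorem fenchel_two_pi_le_turning (hγ : ContDiff ℝ 2 γ) (hL : 0 < L)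
    (hper : Function.Periodic γ L) (hunit : ∀ s, ‖deriv γ s‖ = 1) :
    2 * π ≤ turning (deriv γ) L := by
  by_contra! hK
  have hT : ContDiff ℝ 1 (deriv γ) := hγ.deriv'
  have hnonneg : 0 ≤ turning (deriv γ) L := by
    simpa [turning] using monotone_turning hT hL.le
  obtain ⟨m, hm, hmK⟩ := exists_turning_eq_add_half hT hL (periodic_deriv hper) (a := 0)
    (le_add_of_nonneg_right hL.le) (by linarith)
  have hle := cos_add_cos_le_inner_add hT hunit (by linarith) (left_mem_Icc.2 hm.1)
  rw [inner_add_eq_zero_of_turning_le hγ hL hper hunit hK.le hmK 0 (by simp [hL.le]), sub_self,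
    cos_zero, hmK, add_sub_cancel_left] at hle
  have hlt := cos_lt_cos_of_nonneg_of_le_pi (by linarith) le_rfl
    (by linarith : turning (deriv γ) L / 2 < π)
  rw [cos_pi] at hlt
  linarith

theorem inner_eq_cos_turning_sub_of_turning_eq (hγ : ContDiff ℝ 2 γ) (hL : 0 < L)
    (hper : Function.Periodic γ L) (hunit : ∀ s, ‖deriv γ s‖ = 1)
    (hK : turning (deriv γ) L = 2 * π) {a b : ℝ} (hab : a ≤ b)
    (hπ : turning (deriv γ) b - turning (deriv γ) a ≤ π) :
    ⟪deriv γ a, deriv γ b⟫ = cos (turning (deriv γ) b - turning (deriv γ) a) := by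
  have hT : ContDiff ℝ 1 (deriv γ) := hγ.deriv'
  have hbL : b < a + L := (monotone_turning hT).reflect_lt <| by
    rw [turning_add_period hT (periodic_deriv hper)]
    linarith [pi_pos]
  obtain ⟨m, hm, hmK⟩ := exists_turning_eq_add_half hT hL (periodic_deriv hper) hbL.le
    (by linarith)
  have hzero := inner_add_eq_zero_of_turning_le hγ hL hper hunit hK.le hmK b ⟨hab, hbL.le⟩
  have hsupp : cos (turning (deriv γ) m - turning (deriv γ) b) =
      -cos (turning (deriv γ) b - turning (deriv γ) a) := by
    rw [← cos_pi_sub]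
    congr 1
    linarith
  have hfst := cos_turning_sub_le_inner hT hunit hab hπ
  have hsnd := cos_turning_sub_le_inner hT hunit hm.1
    (by linarith [monotone_turning hT hab])
  rw [inner_add_left, real_inner_comm _ (deriv γ m)] at hzero
  linarith

end Fenchel

/-! ### Planar curves on a sphere -/

section Planar

variable {E : Type*} [NormedAddCommGroup E] [InnerProductSpace ℝ E]

/-- The point at angle `θ` on the ellipse through `p` and `q` centred at the origin, which is a
great circle of the unit sphere when `p` and `q` are orthonormal. Its derivative in `θ` is again of
this form, with `q` and `-p` in place of `p` and `q`. -/
noncomputable def circleArc (p q : E) (θ : ℝ) : E := cos θ • p + sin θ • q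

theorem hasDerivAt_circleArc (p q : E) {θ : ℝ → ℝ} {θ' s : ℝ} (hθ : HasDerivAt θ θ' s) :
    HasDerivAt (fun r ↦ circleArc p q (θ r)) (θ' • circleArc q (-p) (θ s)) s := by
  refine ((hθ.cos.smul_const p).add (hθ.sin.smul_const q)).congr_deriv ?_
  simp only [circleArc]
  module

theorem circleArc_neg_neg (p q : E) (θ : ℝ) : circleArc (-p) (-q) θ = -circleArc p q θ := by
  simp only [circleArc]
  module

theorem inner_circleArc_normal {p q : E} (hp : ‖p‖ = 1) (hq : ‖q‖ = 1) (hpq : ⟪p, q⟫ = 0)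
    (θ : ℝ) : ⟪circleArc p q θ, circleArc q (-p) θ⟫ = 0 := by
  simp only [circleArc, inner_add_left, inner_add_right, real_inner_smul_left,
    real_inner_smul_right, inner_neg_right, hpq, real_inner_comm p q, real_inner_self_eq_norm_sq,
    hp, hq]
  ring

theorem eq_circleArc_of_inner_eq {p q x : E} (hp : ‖p‖ = 1) (hq : ‖q‖ = 1) (hx : ‖x‖ = 1)
    (hpq : ⟪p, q⟫ = 0) {θ : ℝ} (hpx : ⟪p, x⟫ = cos θ) (hqx : ⟪q, x⟫ = sin θ) :
    x = circleArc p q θ := by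
  rw [← sub_eq_zero, ← norm_eq_zero, ← sq_eq_zero_iff, ← real_inner_self_eq_norm_sq]
  simp only [circleArc, inner_sub_left, inner_sub_right, inner_add_left, inner_add_right,
    real_inner_smul_left, real_inner_smul_right, real_inner_self_eq_norm_sq, norm_smul, mul_pow,
    norm_eq_abs, sq_abs, hp, hq, hx, hpq, hpx, hqx, real_inner_comm p x, real_inner_comm q x,
    real_inner_comm p q]
  linear_combination -sin_sq_add_cos_sq θ

theorem exists_eventuallyEq_circleArc {T : ℝ → E} (hT : ContDiff ℝ 1 T)
    (hunit : ∀ s, ‖T s‖ = 1) (hsurj : Function.Surjective (turning T))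
    (hinner : ∀ a b, a ≤ b → turning T b - turning T a ≤ π →
      ⟪T a, T b⟫ = cos (turning T b - turning T a)) (s : ℝ) :
    ∃ p q : E, ‖p‖ = 1 ∧ ‖q‖ = 1 ∧ ⟪p, q⟫ = 0 ∧
      ∃ c, T =ᶠ[𝓝 s] fun r ↦ circleArc p q (turning T r - c) := by
  obtain ⟨a, ha⟩ := hsurj (turning T s - π / 4)
  obtain ⟨b, hb⟩ := hsurj (turning T s + π / 4)
  have hpi := pi_pos
  have hmono := monotone_turning hT
  have hab : ⟪T a, T b⟫ = 0 := by
    rw [hinner a b (hmono.reflect_lt (by linarith)).le (by linarith), ← cos_pi_div_two]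
    congr 1
    linarith
  refine ⟨T a, T b, hunit a, hunit b, hab, turning T a, ?_⟩
  have hcont := (contDiff_turning hT).continuous.continuousAt (x := s)
  filter_upwards [hcont.eventually_const_lt (by linarith : turning T a < _),
    hcont.eventually_lt_const (by linarith : _ < turning T b)] with r har hrb
  refine eq_circleArc_of_inner_eq (hunit a) (hunit b) (hunit r) hab
    (hinner a r (hmono.reflect_lt har).le (by linarith)) ?_
  rw [real_inner_comm, hinner r b (hmono.reflect_lt hrb).le (by linarith), ← cos_pi_div_two_sub]
  congr 1
  linarith

variable {γ : ℝ → E} {x₀ : E} {R : ℝ}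

theorem inner_sub_center_deriv_eq_zero (hγ : Differentiable ℝ γ)
    (hsph : ∀ s, γ s ∈ Metric.sphere x₀ R) (s : ℝ) : ⟪γ s - x₀, deriv γ s⟫ = 0 := by
  have hd := ((hγ s).hasDerivAt.sub_const x₀).norm_sq
  simp only [mem_sphere_iff_norm.1 (hsph _)] at hd
  linarith [hd.unique (hasDerivAt_const s (R ^ 2))]

theorem inner_sub_center_deriv_deriv_eq_neg_one (hγ : ContDiff ℝ 2 γ)
    (hunit : ∀ s, ‖deriv γ s‖ = 1) (hsph : ∀ s, γ s ∈ Metric.sphere x₀ R) (s : ℝ) :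
    ⟪γ s - x₀, deriv (deriv γ) s⟫ = -1 := by
  have hγd := hγ.differentiable two_ne_zero
  have hd := ((hγd s).hasDerivAt.sub_const x₀).inner ℝ (hγ.deriv'.differentiable_one s).hasDerivAt
  simp only [inner_sub_center_deriv_eq_zero hγd hsph, real_inner_self_eq_norm_sq, hunit] at hd
  linarith [hd.unique (hasDerivAt_const s 0)]

-- `1 / κ = -⟪γ - x₀, N⟫` with `N` the unit normal in the plane of the curve, and
-- `⟪γ - x₀, N⟫' = ⟪T, N⟫ - κ ⟪γ - x₀, T⟫ = 0`.
theorem hasDerivAt_inv_curvature_of_planar (hγ : ContDiff ℝ 2 γ) (hunit : ∀ s, ‖deriv γ s‖ = 1)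
    (hsph : ∀ s, γ s ∈ Metric.sphere x₀ R) {p q : E} (hp : ‖p‖ = 1) (hq : ‖q‖ = 1)
    (hpq : ⟪p, q⟫ = 0) {s c : ℝ}
    (harc : deriv γ =ᶠ[𝓝 s] fun r ↦ circleArc p q (turning (deriv γ) r - c)) :
    HasDerivAt (fun r ↦ ‖deriv (deriv γ) r‖⁻¹) 0 s := by
  have hθ (r : ℝ) : HasDerivAt (fun r ↦ turning (deriv γ) r - c) ‖deriv (deriv γ) r‖ r :=
    (hasDerivAt_turning hγ.deriv' r).sub_const c
  have hγd := hγ.differentiable two_ne_zero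
  have hnormal : HasDerivAt
      (fun r ↦ -⟪γ r - x₀, circleArc q (-p) (turning (deriv γ) r - c)⟫) 0 s := by
    refine (((hγd s).hasDerivAt.sub_const x₀).inner ℝ
      (hasDerivAt_circleArc q (-p) (hθ s))).neg.congr_deriv ?_
    rw [circleArc_neg_neg, ← harc.eq_of_nhds, real_inner_smul_right, inner_neg_right,
      inner_sub_center_deriv_eq_zero hγd hsph, harc.eq_of_nhds, inner_circleArc_normal hp hq hpq]
    simp
  refine hnormal.congr_of_eventuallyEq ?_
  filter_upwards [harc.deriv] with r hr
  have hcurv := inner_sub_center_deriv_deriv_eq_neg_one hγ hunit hsph r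
  rw [hr, (hasDerivAt_circleArc p q (hθ r)).deriv, real_inner_smul_right] at hcurv
  exact inv_eq_of_mul_eq_one_right (by linarith)

end Planar

theorem sturm_liouville_equality_spherical_curve_implies_constant_curvature_general
    {E : Type*} [NormedAddCommGroup E] [InnerProductSpace ℝ E] {L : ℝ} (hL : 0 < L)
    {γ : ℝ → E} (hγ : ContDiff ℝ 2 γ) (hper : Function.Periodic γ L)
    (hunit : ∀ s, ‖deriv γ s‖ = 1) {x₀ : E} {R : ℝ} (hsph : ∀ s, γ s ∈ Metric.sphere x₀ R)
    {f : ℝ → ℝ} (hf : ContDiff ℝ 1 f) (hfper : Function.Periodic f L) (hfne : ∃ s, f s ≠ 0)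
    (hle : ∫ s in (0 : ℝ)..L, (4 * deriv f s ^ 2 + ‖deriv (deriv γ) s‖ ^ 2 * f s ^ 2) ≤
      4 * π ^ 2 / L ^ 2 * ∫ s in (0 : ℝ)..L, f s ^ 2) (s₁ s₂ : ℝ) :
    ‖deriv (deriv γ) s₁‖ = ‖deriv (deriv γ) s₂‖ := by
  have hT : ContDiff ℝ 1 (deriv γ) := hγ.deriv'
  have hTper := periodic_deriv hper
  have hκ (s : ℝ) : deriv (turning (deriv γ)) s = ‖deriv (deriv γ) s‖ :=
    (hasDerivAt_turning hT s).deriv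
  have hκ_ne (s : ℝ) : ‖deriv (deriv γ) s‖ ≠ 0 := fun h ↦ by
    simpa [norm_eq_zero.1 h] using inner_sub_center_deriv_deriv_eq_neg_one hγ hunit hsph s
  have hK_le : turning (deriv γ) L ≤ 2 * π :=
    increment_le_two_pi_of_integral_le hL hf hfper (contDiff_turning hT)
      (turning_add_period hT hTper) (hfne.imp fun s hs ↦ mul_ne_zero (hκ s ▸ hκ_ne s) hs)
      (by simpa only [hκ] using hle)
  have hK : turning (deriv γ) L = 2 * π :=
    hK_le.antisymm (fenchel_two_pi_le_turning hγ hL hper hunit)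
  have hsurj := surjective_turning hT hTper hL (by rw [hK]; positivity)
  have hderiv (s : ℝ) : HasDerivAt (fun r ↦ ‖deriv (deriv γ) r‖⁻¹) 0 s := by
    obtain ⟨p, q, hp, hq, hpq, c, harc⟩ := exists_eventuallyEq_circleArc hT hunit hsurj
      (fun a b ↦ inner_eq_cos_turning_sub_of_turning_eq hγ hL hper hunit hK) s
    exact hasDerivAt_inv_curvature_of_planar hγ hunit hsph hp hq hpq harc
  exact inv_injective (is_const_of_deriv_eq_zero (fun s ↦ (hderiv s).differentiableAt)
    (fun s ↦ (hderiv s).deriv) s₁ s₂)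

end General

/-- **Equality case (spherical).** If a simple closed spherical curve admits a nonzero smooth
`L`-periodic function `f` attaining equality in the lower bound
`4π²/L² ≤ μ₁(-4 d²/ds² + κ²)`, then the curvature `κ(s) = ‖γ''(s)‖` is constant. -/
theorem sturm_liouville_equality_spherical_curve_implies_constant_curvature
    (L : ℝ) (hL : 0 < L) (γ : ℝ → EuclideanSpace ℝ (Fin 3))
    (hγ : ContDiff ℝ (⊤ : ℕ∞) γ)
    (hper : ∀ s : ℝ, γ (s + L) = γ s)
    (hunit : ∀ s : ℝ, ‖deriv γ s‖ = 1)
    (hsph : ∀ s : ℝ, ‖γ s‖ = 1)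
    (hsimple : Set.InjOn γ (Set.Ico 0 L))
    (f : ℝ → ℝ) (hf : ContDiff ℝ (⊤ : ℕ∞) f) (hfper : ∀ s : ℝ, f (s + L) = f s)
    (hfne : ∃ s : ℝ, f s ≠ 0)
    (heq : (∫ s in (0:ℝ)..L,
        (4 * (deriv f s)^2 + ‖deriv (deriv γ) s‖^2 * (f s)^2))
      = (4 * π^2 / L^2) * ∫ s in (0:ℝ)..L, (f s)^2) :
    ∀ s₁ s₂ : ℝ, ‖deriv (deriv γ) s₁‖ = ‖deriv (deriv γ) s₂‖ := by
  exact sturm_liouville_equality_spherical_curve_implies_constant_curvature_general hL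
    (contDiff_infty.1 hγ 2) hper hunit (x₀ := 0) (R := 1) (by simpa using hsph)
    (mod_cast contDiff_infty.1 hf 1) hfper hfne heq.le
end

section
/- Let γ : ℝ → ℝ² be a closed plane curve of length L, parametrized by arclength, whose tangent vector has odd rotation number, and with curvature κ(s) = ‖γ''(s)‖. If there exists a nonzero smooth L-periodic function f : ℝ → ℝ with ∫₀^L (4 f'(s)² + κ(s)² f(s)²) ds = (4π²/L²) ∫₀^L f(s)² ds (i.e., equality holds in the lower bound 4π²/L² ≤ μ₁(−4 d²/ds² + κ²)), then the curvature κ is constant. -/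
open Real MeasureTheory

/-!
Identify the plane with `ℂ`, so that the tangent is `exp (iθ)` and the curvature is `|θ'|`. Since
the rotation number is odd, the function `g = f exp (iθ / 2)` is antiperiodic, and
`4 |g'|² = 4 f'² + θ'² f²`. The given equality is thus the equality case of Wirtinger's inequality
for antiperiodic functions, whose lowest frequencies are `±π / L`; hence `g = x + y` with
`x = u exp (iπs / L)` and `y = v exp (-iπs / L)`, an arc of an ellipse.

This arc is degenerate because `γ` closes up. As `g² = |g|² exp (iθ)`, expanding `(x + y)²` gives
`|x + y|² (Re (conj (x y) exp (iθ)) - Re (x conj y)) = 2 (Im (x conj y))²`, where `x y = u v` is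
constant and `x conj y = u conj v exp (2πis / L)`. So the first real part dominates the second,
while both integrate to zero over a period. Hence `Im (u conj v exp (2πis / L))` vanishes
identically, that is, `u = 0` or `v = 0`. Then `g` is a pure exponential, and comparing derivatives
yields `θ' = ±2π / L`.
-/

section CircleExp

theorem hasDerivAt_mul_circleExp {g : ℝ → ℂ} {φ : ℝ → ℝ} {g' : ℂ} {φ' s : ℝ}
    (hg : HasDerivAt g g' s) (hφ : HasDerivAt φ φ' s) :
    HasDerivAt (fun t ↦ g t * Circle.exp (φ t)) ((g' + φ' * Complex.I * g s) * Circle.exp (φ s))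
      s := by
  refine (hg.mul (hφ.ofReal_comp.mul_const Complex.I).cexp).congr_deriv ?_
  simp only [Circle.coe_exp]
  ring

theorem integral_circleExp_two_pi_div_mul {a b : ℝ} (hab : a ≠ b) :
    ∫ s in a..b, (Circle.exp (2 * π / (b - a) * s) : ℂ) = 0 := by
  set c : ℂ := (2 * π / (b - a) : ℝ) * Complex.I with hc
  have hba : (b : ℂ) - a ≠ 0 := by exact_mod_cast sub_ne_zero.2 hab.symm
  have hc0 : c ≠ 0 := by simp [hc, hba, pi_ne_zero]
  have hend : c * b = c * a + 2 * π * Complex.I := by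
    push_cast [hc]
    field_simp
    ring
  calc ∫ s in a..b, (Circle.exp (2 * π / (b - a) * s) : ℂ)
      = ∫ s in a..b, Complex.exp (c * s) := by
        simp only [hc, Circle.coe_exp, Complex.ofReal_mul, mul_right_comm]
    _ = 0 := by
        rw [integral_exp_mul_complex hc0, hend, Complex.exp_add, Complex.exp_two_pi_mul_I, mul_one,
          sub_self, zero_div]

end CircleExp

section FourierCoeff

variable {a b : ℝ} (hab : a < b)

theorem fourierCoeffOn_add {E : Type*} [NormedAddCommGroup E] [NormedSpace ℂ E] {f g : ℝ → E}
    (hf : IntervalIntegrable f volume a b) (hg : IntervalIntegrable g volume a b) (n : ℤ) :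
    fourierCoeffOn hab (fun x ↦ f x + g x) n = fourierCoeffOn hab f n + fourierCoeffOn hab g n := by
  have hcont : ContinuousOn (fun x : ℝ ↦ fourier (-n) (x : AddCircle (b - a))) (Set.uIcc a b) :=
    ((map_continuous _).comp (AddCircle.continuous_mk' _)).continuousOn
  simp only [fourierCoeffOn_eq_integral, smul_add]
  rw [intervalIntegral.integral_add (hf.continuousOn_smul hcont) (hg.continuousOn_smul hcont),
    smul_add]

theorem fourierCoeffOn_of_hasDerivAt_of_eq {f f' : ℝ → ℂ}
    (hf : ∀ x ∈ Set.uIcc a b, HasDerivAt f (f' x) x) (hf' : IntervalIntegrable f' volume a b)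
    (hfab : f a = f b) (n : ℤ) :
    fourierCoeffOn hab f' n = 2 * π * Complex.I * n / (b - a) * fourierCoeffOn hab f n := by
  have hba : (b : ℂ) - a ≠ 0 := by exact_mod_cast (sub_pos.2 hab).ne'
  rcases eq_or_ne n 0 with rfl | hn
  · have hint : ∫ x in a..b, f' x = 0 := by
      rw [intervalIntegral.integral_eq_sub_of_hasDerivAt hf hf', hfab, sub_self]
    simp [fourierCoeffOn_eq_integral, hint]
  · have hn' : (n : ℂ) ≠ 0 := by exact_mod_cast hn
    rw [fourierCoeffOn_of_hasDerivAt hab hn hf hf', hfab]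
    field_simp
    simp

theorem hasSum_sq_fourierCoeffOn_of_continuousOn {f : ℝ → ℂ}
    (hf : ContinuousOn f (Set.uIcc a b)) :
    HasSum (fun n ↦ ‖fourierCoeffOn hab f n‖ ^ 2) ((b - a)⁻¹ * ∫ x in a..b, ‖f x‖ ^ 2) := by
  rw [Set.uIcc_of_le hab.le] at hf
  have hsq : IntegrableOn (fun x ↦ ‖f x‖ ^ 2) (Set.Icc a b) :=
    (hf.norm.pow 2).integrableOn_Icc
  have hmeas : AEStronglyMeasurable f (volume.restrict (Set.Ioc a b)) :=
    (hf.mono Set.Ioc_subset_Icc_self).aestronglyMeasurable measurableSet_Ioc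
  exact hasSum_sq_fourierCoeffOn hab <|
    (memLp_two_iff_integrable_sq_norm hmeas).2 (hsq.mono_set Set.Ioc_subset_Icc_self)

theorem eq_sum_fourier_of_fourierCoeffOn_eq_zero {f : ℝ → ℂ}
    (hf : ContinuousOn f (Set.uIcc a b)) (hfab : f a = f b) {S : Finset ℤ}
    (hS : ∀ n ∉ S, fourierCoeffOn hab f n = 0) {x : ℝ} (hx : x ∈ Set.uIcc a b) :
    f x = ∑ n ∈ S, fourierCoeffOn hab f n * fourier n (x : AddCircle (b - a)) := by
  have : Fact (0 < b - a) := ⟨sub_pos.2 hab⟩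
  rw [Set.uIcc_of_le hab.le] at hf hx
  have hper : f a = f (a + (b - a)) := by rw [hfab, add_sub_cancel]
  let F : C(AddCircle (b - a), ℂ) := ⟨AddCircle.liftIco (b - a) a f,
    AddCircle.liftIco_continuous hper (by rwa [add_sub_cancel])⟩
  have hcoeff (n : ℤ) : fourierCoeff F n = fourierCoeffOn hab f n := by
    have h := fourierCoeff_liftIco_eq (T := b - a) (a := a) f n
    simp only [add_sub_cancel] at h
    exact h
  have hFx : F x = f x := by
    rcases hx.2.eq_or_lt with rfl | hxb
    · have h : F ((a + (x - a) : ℝ)) = f x := by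
        rw [AddCircle.coe_add_period, ← hfab]
        exact AddCircle.liftIco_coe_apply ⟨le_rfl, by linarith⟩
      simpa only [add_sub_cancel] using h
    · exact AddCircle.liftIco_coe_apply ⟨hx.1, by linarith⟩
  have hzero (n : ℤ) (hn : n ∉ S) : fourierCoeff F n = 0 := by rw [hcoeff, hS n hn]
  have hsum := has_pointwise_sum_fourier_series_of_summable
    (summable_of_ne_finset_zero (s := S) hzero) (x : AddCircle (b - a))
  rw [← hFx, ← hsum.tsum_eq, tsum_eq_sum (s := S) fun n hn ↦ by rw [hzero n hn, zero_smul]]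
  simp only [hcoeff, smul_eq_mul]

end FourierCoeff

section Antiperiodic

variable {a b : ℝ} (hab : a < b)

/-- The Fourier coefficient of `g` at the half-integer frequency `n + 1 / 2` relative to the
interval `[a, b]`. These are the frequencies of functions with `g b = -g a`; they are shifted to
integers by the factor `exp (-iπs / (b - a))`. -/
noncomputable def halfFourierCoeffOn (g : ℝ → ℂ) (n : ℤ) : ℂ :=
  fourierCoeffOn hab (fun s ↦ g s * Circle.exp (-(π / (b - a)) * s)) n

theorem mul_circleExp_eq_of_antiperiodic (hab : a ≠ b) {g : ℝ → ℂ} (hgab : g b = -g a) :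
    g a * Circle.exp (-(π / (b - a)) * a) = g b * Circle.exp (-(π / (b - a)) * b) := by
  have hba : b - a ≠ 0 := sub_ne_zero.2 hab.symm
  have hshift : -(π / (b - a)) * a = -(π / (b - a)) * b + π := by
    field_simp
    ring
  rw [hgab, hshift, Circle.exp_add, Circle.coe_mul, Circle.coe_exp π, Complex.exp_pi_mul_I]
  ring

theorem halfFourierCoeffOn_of_hasDerivAt {g g' : ℝ → ℂ}
    (hg : ∀ x ∈ Set.uIcc a b, HasDerivAt g (g' x) x) (hg' : ContinuousOn g' (Set.uIcc a b))
    (hgab : g b = -g a) (n : ℤ) :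
    halfFourierCoeffOn hab g' n =
      π / (b - a) * (2 * n + 1) * Complex.I * halfFourierCoeffOn hab g n := by
  set ω : ℝ := π / (b - a) with hω
  have hgc : ContinuousOn g (Set.uIcc a b) := fun x hx ↦ (hg x hx).continuousAt.continuousWithinAt
  have hderiv (x : ℝ) (hx : x ∈ Set.uIcc a b) : HasDerivAt (fun s ↦ g s * Circle.exp (-ω * s))
      (g' x * Circle.exp (-ω * x) + -(ω * Complex.I) * (g x * Circle.exp (-ω * x))) x := by
    refine (hasDerivAt_mul_circleExp (hg x hx) (hasDerivAt_const_mul (-ω))).congr_deriv ?_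
    push_cast
    ring
  have htwist := fourierCoeffOn_of_hasDerivAt_of_eq hab hderiv
    (ContinuousOn.intervalIntegrable (by fun_prop))
    (mul_circleExp_eq_of_antiperiodic hab.ne hgab) n
  rw [fourierCoeffOn_add hab (ContinuousOn.intervalIntegrable (by fun_prop))
    (ContinuousOn.intervalIntegrable (by fun_prop)), fourierCoeffOn.const_mul] at htwist
  rw [halfFourierCoeffOn, halfFourierCoeffOn, ← hω, eq_sub_of_add_eq htwist, hω]
  push_cast
  ring

theorem hasSum_sq_halfFourierCoeffOn {g : ℝ → ℂ} (hg : ContinuousOn g (Set.uIcc a b)) :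
    HasSum (fun n ↦ ‖halfFourierCoeffOn hab g n‖ ^ 2) ((b - a)⁻¹ * ∫ x in a..b, ‖g x‖ ^ 2) := by
  have hgc : ContinuousOn (fun s ↦ g s * Circle.exp (-(π / (b - a)) * s)) (Set.uIcc a b) := by
    fun_prop
  simpa only [halfFourierCoeffOn, norm_mul, Circle.norm_coe, mul_one] using
    hasSum_sq_fourierCoeffOn_of_continuousOn hab hgc

theorem eq_sum_circleExp_of_halfFourierCoeffOn_eq_zero {g : ℝ → ℂ}
    (hg : ContinuousOn g (Set.uIcc a b)) (hgab : g b = -g a) {S : Finset ℤ}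
    (hS : ∀ n ∉ S, halfFourierCoeffOn hab g n = 0) {x : ℝ} (hx : x ∈ Set.uIcc a b) :
    g x = ∑ n ∈ S, halfFourierCoeffOn hab g n * Circle.exp ((2 * n + 1) * (π / (b - a)) * x) := by
  have hsum := eq_sum_fourier_of_fourierCoeffOn_eq_zero hab (by fun_prop)
    (mul_circleExp_eq_of_antiperiodic hab.ne hgab) hS hx
  have huntwist : g x = g x * Circle.exp (-(π / (b - a)) * x) * Circle.exp (π / (b - a) * x) := by
    simp [mul_assoc]
  rw [huntwist, hsum, Finset.sum_mul]
  refine Finset.sum_congr rfl fun n _ ↦ ?_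
  rw [halfFourierCoeffOn, mul_assoc, fourier_coe_apply, Circle.coe_exp, Circle.coe_exp,
    ← Complex.exp_add]
  congr 2
  push_cast
  ring

end Antiperiodic

section Wirtinger

variable {a b : ℝ} {g g' : ℝ → ℂ}

theorem hasSum_mul_sq_halfFourierCoeffOn_of_hasDerivAt (hab : a < b)
    (hg : ∀ x ∈ Set.uIcc a b, HasDerivAt g (g' x) x) (hg' : ContinuousOn g' (Set.uIcc a b))
    (hgab : g b = -g a) :
    HasSum (fun n : ℤ ↦ 4 * (π / (b - a)) ^ 2 * (n * (n + 1)) * ‖halfFourierCoeffOn hab g n‖ ^ 2)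
      ((b - a)⁻¹ * ((∫ x in a..b, ‖g' x‖ ^ 2) - (π / (b - a)) ^ 2 * ∫ x in a..b, ‖g x‖ ^ 2)) := by
  have hgc : ContinuousOn g (Set.uIcc a b) := fun x hx ↦ (hg x hx).continuousAt.continuousWithinAt
  have hnorm (n : ℤ) : ‖halfFourierCoeffOn hab g' n‖ ^ 2 =
      (π / (b - a)) ^ 2 * (2 * n + 1) ^ 2 * ‖halfFourierCoeffOn hab g n‖ ^ 2 := by
    have hfactor : (π / (b - a) * (2 * n + 1) : ℂ) = ((π / (b - a) * (2 * n + 1) : ℝ) : ℂ) := by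
      push_cast
      rfl
    rw [halfFourierCoeffOn_of_hasDerivAt hab hg hg' hgab, hfactor, norm_mul, norm_mul,
      Complex.norm_I, Complex.norm_real, Real.norm_eq_abs, mul_pow, mul_one, sq_abs]
    ring
  have hsub : HasSum (fun n : ℤ ↦ ‖halfFourierCoeffOn hab g' n‖ ^ 2 -
      (π / (b - a)) ^ 2 * ‖halfFourierCoeffOn hab g n‖ ^ 2) _ :=
    (hasSum_sq_halfFourierCoeffOn hab hg').sub
      ((hasSum_sq_halfFourierCoeffOn hab hgc).mul_left ((π / (b - a)) ^ 2))
  convert hsub using 1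
  · ext n
    rw [hnorm]
    ring
  · ring

theorem exists_eq_circleExp_of_integral_norm_deriv_sq_eq (hab : a < b)
    (hg : ∀ x ∈ Set.uIcc a b, HasDerivAt g (g' x) x) (hg' : ContinuousOn g' (Set.uIcc a b))
    (hgab : g b = -g a)
    (heq : ∫ x in a..b, ‖g' x‖ ^ 2 = (π / (b - a)) ^ 2 * ∫ x in a..b, ‖g x‖ ^ 2) :
    ∃ u v : ℂ, ∀ x ∈ Set.uIcc a b,
      g x = u * Circle.exp (π / (b - a) * x) + v * Circle.exp (-(π / (b - a) * x)) := by
  have hω : 0 < π / (b - a) := div_pos pi_pos (sub_pos.2 hab)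
  have hsum := hasSum_mul_sq_halfFourierCoeffOn_of_hasDerivAt hab hg hg' hgab
  rw [heq, sub_self, mul_zero] at hsum
  have hconsecutive (n : ℤ) : (0 : ℝ) ≤ n * (n + 1) := by
    have : 0 ≤ n * (n + 1) := by rcases le_or_gt 0 n with h | h <;> nlinarith
    exact_mod_cast this
  have hterm := (hasSum_zero_iff_of_nonneg fun n ↦
    mul_nonneg (mul_nonneg (by positivity) (hconsecutive n)) (sq_nonneg _)).1 hsum
  have hcoeff (n : ℤ) (hn : n ∉ ({0, -1} : Finset ℤ)) : halfFourierCoeffOn hab g n = 0 := by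
    have hn' : (n : ℝ) * (n + 1) ≠ 0 := by
      simp only [Finset.mem_insert, Finset.mem_singleton, not_or] at hn
      exact_mod_cast mul_ne_zero hn.1 (by omega)
    simpa [hω.ne', hn'] using congrFun hterm n
  refine ⟨halfFourierCoeffOn hab g 0, halfFourierCoeffOn hab g (-1), fun x hx ↦ ?_⟩
  have hgc : ContinuousOn g (Set.uIcc a b) := fun x hx ↦ (hg x hx).continuousAt.continuousWithinAt
  rw [eq_sum_circleExp_of_halfFourierCoeffOn_eq_zero hab hgc hgab hcoeff hx,
    Finset.sum_pair (by norm_num)]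
  norm_num

end Wirtinger

section HalfAngleLift

variable {f θ : ℝ → ℝ} {f' θ' a b s : ℝ}

/-- The square root `exp (iθ / 2)` of the tangent direction `exp (iθ)`, weighted by the real
function `f`. Its derivative has squared norm `f'² + θ'² f² / 4`. -/
noncomputable def halfAngleLift (f θ : ℝ → ℝ) (s : ℝ) : ℂ :=
  f s * Circle.exp (θ s / 2)

theorem norm_halfAngleLift : ‖halfAngleLift f θ s‖ = |f s| := by
  rw [halfAngleLift, norm_mul, Circle.norm_coe, mul_one, Complex.norm_real, Real.norm_eq_abs]

theorem halfAngleLift_sq :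
    halfAngleLift f θ s ^ 2 = (‖halfAngleLift f θ s‖ ^ 2 : ℝ) * Circle.exp (θ s) := by
  rw [norm_halfAngleLift, sq_abs, halfAngleLift, mul_pow, ← Circle.coe_pow, sq (Circle.exp _),
    ← Circle.exp_add, add_halves, Complex.ofReal_pow]

theorem hasDerivAt_halfAngleLift (hf : HasDerivAt f f' s) (hθ : HasDerivAt θ θ' s) :
    HasDerivAt (halfAngleLift f θ)
      ((f' + (θ' / 2 : ℝ) * Complex.I * f s) * Circle.exp (θ s / 2)) s :=
  hasDerivAt_mul_circleExp hf.ofReal_comp (hθ.div_const 2)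

theorem four_mul_sq_norm_halfAngleLift_deriv :
    4 * ‖(f' + (θ' / 2 : ℝ) * Complex.I * f s) * Circle.exp (θ s / 2)‖ ^ 2 =
      4 * f' ^ 2 + θ' ^ 2 * f s ^ 2 := by
  have hre_im : (f' + (θ' / 2 : ℝ) * Complex.I * f s : ℂ) =
      f' + (θ' / 2 * f s : ℝ) * Complex.I := by
    push_cast
    ring
  rw [norm_mul, Circle.norm_coe, mul_one, hre_im, Complex.sq_norm, Complex.normSq_add_mul_I]
  ring

theorem halfAngleLift_antiperiodic {n : ℤ} (hn : Odd n) (hθ : θ b - θ a = 2 * π * n)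
    (hf : f b = f a) : halfAngleLift f θ b = -halfAngleLift f θ a := by
  have hhalf : θ b / 2 = θ a / 2 + n * π := by linarith
  have hsign : (Circle.exp (n * π) : ℂ) = -1 := by
    rw [Circle.coe_exp, Complex.ofReal_mul, Complex.ofReal_intCast, mul_assoc, Complex.exp_int_mul,
      Complex.exp_pi_mul_I, hn.neg_one_zpow]
  rw [halfAngleLift, halfAngleLift, hf, hhalf, Circle.exp_add, Circle.coe_mul, hsign]
  ring

theorem eq_two_mul_of_halfAngleLift_eq {S : Set ℝ} (hS : UniqueDiffWithinAt ℝ S s)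
    (hs : s ∈ S) (hf : HasDerivAt f f' s) (hθ : HasDerivAt θ θ' s) {c : ℂ} {ω : ℝ} (hfs : f s ≠ 0)
    (hlift : ∀ t ∈ S, halfAngleLift f θ t = c * Circle.exp (ω * t)) : θ' = 2 * ω := by
  have hexp : HasDerivAt (fun t ↦ c * Circle.exp (ω * t))
      ((0 + ω * Complex.I * c) * Circle.exp (ω * s)) s :=
    hasDerivAt_mul_circleExp (hasDerivAt_const s c) (hasDerivAt_const_mul ω)
  have hderiv : (f' + (θ' / 2 : ℝ) * Complex.I * f s) * (Circle.exp (θ s / 2) : ℂ) =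
      (ω * Complex.I * f s) * Circle.exp (θ s / 2) :=
    calc _ = (0 + ω * Complex.I * c) * (Circle.exp (ω * s) : ℂ) :=
          hS.eq_deriv S (hasDerivAt_halfAngleLift hf hθ).hasDerivWithinAt
            (hexp.hasDerivWithinAt.congr_of_mem hlift hs)
      _ = ω * Complex.I * halfAngleLift f θ s := by
          rw [hlift s hs]
          ring
      _ = _ := by
          rw [halfAngleLift]
          ring
  have him := congrArg Complex.im (mul_right_cancel₀ (Circle.coe_ne_zero _) hderiv)
  simp only [Complex.add_im, Complex.mul_im, Complex.mul_re, Complex.ofReal_re, Complex.ofReal_im,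
    Complex.I_re, Complex.I_im, mul_zero, mul_one, zero_add, add_zero, sub_zero] at him
  linarith [mul_right_cancel₀ hfs him]

end HalfAngleLift

section EllipseComparison

open scoped ComplexConjugate

theorem sq_norm_add_mul_re_sub_re {x y ζ : ℂ} (hζ : (x + y) ^ 2 = (‖x + y‖ ^ 2 : ℝ) * ζ) :
    ‖x + y‖ ^ 2 * ((conj (x * y) * ζ).re - (x * conj y).re) = 2 * (x * conj y).im ^ 2 := by
  have hre : ‖x + y‖ ^ 2 * (conj (x * y) * ζ).re = (conj (x * y) * (x + y) ^ 2).re := by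
    rw [hζ, mul_left_comm, Complex.re_ofReal_mul]
  rw [mul_sub, hre, Complex.sq_norm, Complex.normSq_apply, sq (x + y)]
  simp only [Complex.mul_re, Complex.mul_im, Complex.add_re, Complex.add_im, Complex.conj_re,
    Complex.conj_im]
  ring

theorem re_mul_conj_le {x y ζ : ℂ} (hζ : (x + y) ^ 2 = (‖x + y‖ ^ 2 : ℝ) * ζ) (hζ1 : ‖ζ‖ = 1) :
    (x * conj y).re ≤ (conj (x * y) * ζ).re := by
  rcases eq_or_ne (x + y) 0 with hxy | hxy
  · obtain rfl : y = -x := (neg_eq_of_add_eq_zero_right hxy).symm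
    have hl : (x * conj (-x)).re = -‖x‖ ^ 2 := by
      rw [map_neg, mul_neg, Complex.mul_conj', Complex.neg_re]
      norm_cast
    rw [hl]
    have hle : |(conj (x * -x) * ζ).re| ≤ ‖x‖ ^ 2 :=
      (Complex.abs_re_le_norm _).trans_eq <| by simp [hζ1, sq]
    exact neg_le_of_abs_le hle
  · have hpos : 0 < ‖x + y‖ ^ 2 := by positivity
    nlinarith [sq_norm_add_mul_re_sub_re hζ, sq_nonneg (x * conj y).im]

variable {a b : ℝ} {u v : ℂ} {g : ℝ → ℂ} {θ : ℝ → ℝ}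

theorem integral_re_const_mul {c : ℂ} {h : ℝ → ℂ} (hh : ContinuousOn h (Set.uIcc a b)) :
    ∫ s in a..b, (c * h s).re = (c * ∫ s in a..b, h s).re := by
  have hint : IntervalIntegrable (fun s ↦ c * h s) volume a b :=
    (hh.const_smul c).intervalIntegrable
  rw [← intervalIntegral.integral_const_mul]
  exact Complex.reCLM.intervalIntegral_comp_comm hint

theorem mul_circleExp_mul_conj (t : ℝ) :
    u * Circle.exp t * conj (v * Circle.exp (-t)) = u * conj v * Circle.exp (2 * t) := by
  rw [map_mul, ← Circle.coe_inv_eq_conj, ← Circle.exp_neg, neg_neg, mul_mul_mul_comm,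
    ← Circle.coe_mul, ← Circle.exp_add, two_mul]

theorem mul_circleExp_mul_circleExp_neg (t : ℝ) :
    u * Circle.exp t * (v * Circle.exp (-t)) = u * v := by
  rw [mul_mul_mul_comm, ← Circle.coe_mul, ← Circle.exp_add, add_neg_cancel, Circle.exp_zero,
    Circle.coe_one, mul_one]

theorem eq_zero_of_im_mul_circleExp_eq_zero (hab : a < b) {w : ℂ}
    (hw : ∀ s ∈ Set.Icc a b, (w * Circle.exp (2 * π / (b - a) * s)).im = 0) : w = 0 := by
  have hba : 0 < b - a := sub_pos.2 hab
  have hstart := hw a ⟨le_rfl, hab.le⟩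
  have hquarter := hw (a + (b - a) / 4) ⟨by linarith, by linarith⟩
  have hangle : 2 * π / (b - a) * (a + (b - a) / 4) = 2 * π / (b - a) * a + π / 2 := by
    field_simp
    ring
  have hi : (Circle.exp (π / 2) : ℂ) = Complex.I := by
    rw [Circle.coe_exp]
    push_cast
    exact Complex.exp_pi_div_two_mul_I
  rw [hangle, Circle.exp_add, Circle.coe_mul, hi, ← mul_assoc, Complex.mul_I_im] at hquarter
  exact (mul_eq_zero.1 (Complex.ext hquarter hstart)).resolve_right (Circle.coe_ne_zero _)

theorem eq_zero_or_eq_zero_of_integral_circleExp_eq_zero (hab : a < b)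
    (hθ : ContinuousOn θ (Set.uIcc a b))
    (hg : ∀ s ∈ Set.uIcc a b,
      g s = u * Circle.exp (π / (b - a) * s) + v * Circle.exp (-(π / (b - a) * s)))
    (hsq : ∀ s ∈ Set.uIcc a b, g s ^ 2 = (‖g s‖ ^ 2 : ℝ) * (Circle.exp (θ s) : ℂ))
    (hclosed : ∫ s in a..b, (Circle.exp (θ s) : ℂ) = 0) : u = 0 ∨ v = 0 := by
  set p : ℝ → ℝ := fun s ↦ (conj (u * v) * Circle.exp (θ s)).re with hp
  set q : ℝ → ℂ := fun s ↦ u * conj v * Circle.exp (2 * π / (b - a) * s) with hq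
  have hprod (s : ℝ) : u * Circle.exp (π / (b - a) * s) *
      conj (v * Circle.exp (-(π / (b - a) * s))) = q s := by
    rw [mul_circleExp_mul_conj, ← mul_assoc, ← mul_div_assoc]
  have hle (s : ℝ) (hs : s ∈ Set.uIcc a b) : (q s).re ≤ p s := by
    have h := re_mul_conj_le (hg s hs ▸ hsq s hs) (Circle.norm_coe _)
    rwa [hprod, mul_circleExp_mul_circleExp_neg] at h
  have hpc : ContinuousOn p (Set.uIcc a b) := by fun_prop
  have hqc : ContinuousOn (fun s ↦ (q s).re) (Set.uIcc a b) := by fun_prop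
  have hzero : ∫ s in a..b, p s - (q s).re = 0 := by
    rw [intervalIntegral.integral_sub hpc.intervalIntegrable hqc.intervalIntegrable,
      integral_re_const_mul (by fun_prop), integral_re_const_mul (by fun_prop), hclosed,
      integral_circleExp_two_pi_div_mul hab.ne, mul_zero, mul_zero, sub_self]
  have him (s : ℝ) (hs : s ∈ Set.uIcc a b) : (q s).im = 0 := by
    by_contra hne
    have h := sq_norm_add_mul_re_sub_re (hg s hs ▸ hsq s hs)
    rw [hprod, mul_circleExp_mul_circleExp_neg] at h
    have hlt : 0 < p s - (q s).re :=
      pos_of_mul_pos_right (h ▸ (by positivity : 0 < 2 * (q s).im ^ 2)) (by positivity)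
    rw [Set.uIcc_of_le hab.le] at *
    exact (intervalIntegral.integral_pos hab (hpc.sub hqc)
      (fun t ht ↦ sub_nonneg.2 (hle t (Set.Ioc_subset_Icc_self ht))) ⟨s, hs, hlt⟩).ne' hzero
  rw [Set.uIcc_of_le hab.le] at him
  simpa using eq_zero_of_im_mul_circleExp_eq_zero hab him

end EllipseComparison

section Rigidity

variable {a b : ℝ} {f f' θ θ' : ℝ → ℝ}

theorem integral_sq_norm_halfAngleLift_deriv_eq
    (heq : ∫ s in a..b, (4 * f' s ^ 2 + θ' s ^ 2 * f s ^ 2) =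
      4 * π ^ 2 / (b - a) ^ 2 * ∫ s in a..b, f s ^ 2) :
    ∫ s in a..b, ‖(f' s + (θ' s / 2 : ℝ) * Complex.I * f s) * Circle.exp (θ s / 2)‖ ^ 2 =
      (π / (b - a)) ^ 2 * ∫ s in a..b, ‖halfAngleLift f θ s‖ ^ 2 := by
  simp only [norm_halfAngleLift, sq_abs, div_pow]
  simp only [← four_mul_sq_norm_halfAngleLift_deriv (θ := θ),
    intervalIntegral.integral_const_mul] at heq
  linear_combination heq / 4

theorem abs_deriv_angle_eq_of_integral_eq (hab : a < b)
    (hf : ∀ s ∈ Set.uIcc a b, HasDerivAt f (f' s) s) (hf' : ContinuousOn f' (Set.uIcc a b))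
    (hθ : ∀ s ∈ Set.uIcc a b, HasDerivAt θ (θ' s) s) (hθ' : ContinuousOn θ' (Set.uIcc a b))
    (hfab : f b = f a) (hne : ∃ s ∈ Set.uIcc a b, f s ≠ 0) {n : ℤ} (hn : Odd n)
    (hrot : θ b - θ a = 2 * π * n) (hclosed : ∫ s in a..b, (Circle.exp (θ s) : ℂ) = 0)
    (heq : ∫ s in a..b, (4 * f' s ^ 2 + θ' s ^ 2 * f s ^ 2) =
      4 * π ^ 2 / (b - a) ^ 2 * ∫ s in a..b, f s ^ 2) {s : ℝ} (hs : s ∈ Set.uIcc a b) :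
    |θ' s| = 2 * π / (b - a) := by
  have hω : 0 < π / (b - a) := div_pos pi_pos (sub_pos.2 hab)
  have hfc : ContinuousOn f (Set.uIcc a b) := fun s hs ↦ (hf s hs).continuousAt.continuousWithinAt
  have hθc : ContinuousOn θ (Set.uIcc a b) := fun s hs ↦ (hθ s hs).continuousAt.continuousWithinAt
  obtain ⟨u, v, huv⟩ := exists_eq_circleExp_of_integral_norm_deriv_sq_eq hab
    (fun s hs ↦ hasDerivAt_halfAngleLift (hf s hs) (hθ s hs)) (by fun_prop)
    (halfAngleLift_antiperiodic hn hrot hfab) (integral_sq_norm_halfAngleLift_deriv_eq heq)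
  obtain ⟨c, ω, hωabs, hpure⟩ : ∃ (c : ℂ) (ω : ℝ), |ω| = π / (b - a) ∧
      ∀ t ∈ Set.uIcc a b, halfAngleLift f θ t = c * Circle.exp (ω * t) := by
    rcases eq_zero_or_eq_zero_of_integral_circleExp_eq_zero hab hθc huv
      (fun _ _ ↦ halfAngleLift_sq) hclosed with rfl | rfl
    · exact ⟨v, -(π / (b - a)), by rw [abs_neg, abs_of_pos hω], by simpa using huv⟩
    · exact ⟨u, π / (b - a), abs_of_pos hω, by simpa using huv⟩
  have hconst (t : ℝ) (ht : t ∈ Set.uIcc a b) : |f t| = ‖c‖ := by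
    rw [← norm_halfAngleLift (θ := θ), hpure t ht, norm_mul, Circle.norm_coe, mul_one]
  have hfs : f s ≠ 0 := by
    obtain ⟨t, ht, hft⟩ := hne
    rwa [← abs_pos, hconst s hs, ← hconst t ht, abs_pos]
  have huniq : UniqueDiffOn ℝ (Set.uIcc a b) := Set.uIcc_of_le hab.le ▸ uniqueDiffOn_Icc hab
  rw [eq_two_mul_of_halfAngleLift_eq (huniq s hs) hs (hf s hs) (hθ s hs) hfs hpure, abs_mul,
    hωabs, abs_two, mul_div_assoc]

end Rigidity

section PlaneCurve

variable {γ : ℝ → EuclideanSpace ℝ (Fin 2)} {θ : ℝ → ℝ}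

theorem toLp_cos_sin_eq_repr_circleExp (t : ℝ) :
    (WithLp.equiv 2 (Fin 2 → ℝ)).symm ![cos t, sin t] =
      Complex.orthonormalBasisOneI.repr (Circle.exp t) := by
  ext i
  fin_cases i <;> simp [Complex.exp_ofReal_mul_I_re, Complex.exp_ofReal_mul_I_im]

theorem norm_deriv_deriv_eq_abs_deriv_angle {s : ℝ} (hθ : DifferentiableAt ℝ θ s)
    (htangent : ∀ s, deriv γ s = (WithLp.equiv 2 (Fin 2 → ℝ)).symm ![cos (θ s), sin (θ s)]) :
    ‖deriv (deriv γ) s‖ = |deriv θ s| := by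
  have hexp : HasDerivAt (fun t ↦ (Circle.exp (θ t) : ℂ))
      (deriv θ s * Complex.I * Circle.exp (θ s)) s := by
    simpa only [zero_add, mul_one, one_mul] using
      hasDerivAt_mul_circleExp (hasDerivAt_const s (1 : ℂ)) hθ.hasDerivAt
  have hderiv : HasDerivAt (deriv γ) (Complex.orthonormalBasisOneI.repr
      (deriv θ s * Complex.I * Circle.exp (θ s))) s := by
    rw [funext fun t ↦ (htangent t).trans (toLp_cos_sin_eq_repr_circleExp (θ t))]
    exact Complex.orthonormalBasisOneI.repr.toContinuousLinearEquiv.hasFDerivAt.comp_hasDerivAt s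
      hexp
  rw [hderiv.deriv, LinearIsometryEquiv.norm_map, norm_mul, norm_mul, Circle.norm_coe,
    Complex.norm_I, mul_one, mul_one, Complex.norm_real, Real.norm_eq_abs]

theorem integral_circleExp_angle_eq_zero (hθ : Continuous θ) {a b : ℝ} (hγ : γ a = γ b)
    (htangent : ∀ s, deriv γ s = (WithLp.equiv 2 (Fin 2 → ℝ)).symm ![cos (θ s), sin (θ s)]) :
    ∫ s in a..b, (Circle.exp (θ s) : ℂ) = 0 := by
  have hderiv (s : ℝ) : HasDerivAt γ (Complex.orthonormalBasisOneI.repr (Circle.exp (θ s))) s := by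
    have hs := (htangent s).trans (toLp_cos_sin_eq_repr_circleExp (θ s))
    rw [← hs]
    refine (differentiableAt_of_deriv_ne_zero ?_).hasDerivAt
    simp [hs]
  have hcomplex (s : ℝ) : HasDerivAt (fun t ↦ Complex.orthonormalBasisOneI.repr.symm (γ t))
      (Circle.exp (θ s)) s := by
    have h := Complex.orthonormalBasisOneI.repr.symm.toContinuousLinearEquiv.hasFDerivAt
      |>.comp_hasDerivAt s (hderiv s)
    exact h.congr_deriv (Complex.orthonormalBasisOneI.repr.symm_apply_apply _)
  rw [intervalIntegral.integral_eq_sub_of_hasDerivAt (fun s _ ↦ hcomplex s)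
    (Continuous.intervalIntegrable (by fun_prop) a b), hγ, sub_self]

theorem periodic_deriv_s3 {𝕜 F : Type*} [NontriviallyNormedField 𝕜] [NormedAddCommGroup F]
    [NormedSpace 𝕜 F] {h : 𝕜 → F} {c : 𝕜} (hh : Function.Periodic h c) :
    Function.Periodic (deriv h) c := fun x ↦ by
  rw [← deriv_comp_add_const, hh.funext]

end PlaneCurve

theorem sturm_liouville_equality_plane_curve_implies_constant_curvature_general
    (L : ℝ) (hL : 0 < L) (γ : ℝ → EuclideanSpace ℝ (Fin 2))
    (hper : ∀ s : ℝ, γ (s + L) = γ s) (θ : ℝ → ℝ) (hθ : ContDiff ℝ 1 θ)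
    (htangent : ∀ s : ℝ, deriv γ s
      = (WithLp.equiv 2 (Fin 2 → ℝ)).symm ![Real.cos (θ s), Real.sin (θ s)])
    (n : ℤ) (hn : Odd n) (hrot : θ L - θ 0 = 2 * π * n)
    (f : ℝ → ℝ) (hf : ContDiff ℝ 1 f) (hfper : ∀ s : ℝ, f (s + L) = f s)
    (hfne : ∃ s : ℝ, f s ≠ 0)
    (heq : (∫ s in (0:ℝ)..L, (4 * (deriv f s) ^ 2 + ‖deriv (deriv γ) s‖ ^ 2 * (f s) ^ 2))
      = (4 * π ^ 2 / L ^ 2) * ∫ s in (0:ℝ)..L, (f s) ^ 2) (s : ℝ) :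
    ‖deriv (deriv γ) s‖ = 2 * π / L := by
  have hcurv (r : ℝ) : ‖deriv (deriv γ) r‖ = |deriv θ r| :=
    norm_deriv_deriv_eq_abs_deriv_angle (hθ.differentiable one_ne_zero r) htangent
  obtain ⟨t, ht, hst⟩ := (periodic_deriv_s3 (periodic_deriv_s3 hper)).exists_mem_Ico₀ hL s
  obtain ⟨r, hr, hfr⟩ : ∃ r ∈ Set.uIcc 0 L, f r ≠ 0 := by
    obtain ⟨r₀, hr₀⟩ := hfne
    obtain ⟨r, hr, hfr⟩ := Function.Periodic.exists_mem_Ico₀ hfper hL r₀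
    exact ⟨r, Set.Icc_subset_uIcc (Set.Ico_subset_Icc_self hr), hfr ▸ hr₀⟩
  have hrigid := abs_deriv_angle_eq_of_integral_eq hL
    (fun s _ ↦ (hf.differentiable one_ne_zero s).hasDerivAt)
    (hf.continuous_deriv le_rfl).continuousOn
    (fun s _ ↦ (hθ.differentiable one_ne_zero s).hasDerivAt)
    (hθ.continuous_deriv le_rfl).continuousOn (by simpa using hfper 0) ⟨r, hr, hfr⟩ hn hrot
    (integral_circleExp_angle_eq_zero hθ.continuous (by simpa using (hper 0).symm) htangent)
    (by simpa only [hcurv, sq_abs, sub_zero] using heq)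
    (Set.Icc_subset_uIcc (Set.Ico_subset_Icc_self ht))
  rwa [hst, hcurv, ← sub_zero L]

/-- **Equality case (plane).** If a closed plane curve with odd rotation number admits a
nonzero smooth `L`-periodic function `f` attaining equality in the lower bound
`4π²/L² ≤ μ₁(-4 d²/ds² + κ²)`, then the curvature `κ(s) = ‖γ''(s)‖` is constant. -/
theorem sturm_liouville_equality_plane_curve_implies_constant_curvature
    (L : ℝ) (hL : 0 < L) (γ : ℝ → EuclideanSpace ℝ (Fin 2))
    (hγ : ContDiff ℝ (⊤ : ℕ∞) γ)
    (hper : ∀ s : ℝ, γ (s + L) = γ s)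
    (hunit : ∀ s : ℝ, ‖deriv γ s‖ = 1)
    (θ : ℝ → ℝ) (hθ : ContDiff ℝ (⊤ : ℕ∞) θ)
    (htangent : ∀ s : ℝ, deriv γ s
      = (WithLp.equiv 2 (Fin 2 → ℝ)).symm ![Real.cos (θ s), Real.sin (θ s)])
    (n : ℤ) (hn : Odd n) (hrot : θ L - θ 0 = 2 * π * n)
    (f : ℝ → ℝ) (hf : ContDiff ℝ (⊤ : ℕ∞) f) (hfper : ∀ s : ℝ, f (s + L) = f s)
    (hfne : ∃ s : ℝ, f s ≠ 0)
    (heq : (∫ s in (0:ℝ)..L,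
        (4 * (deriv f s)^2 + ‖deriv (deriv γ) s‖^2 * (f s)^2))
      = (4 * π^2 / L^2) * ∫ s in (0:ℝ)..L, (f s)^2) :
    ∀ s₁ s₂ : ℝ, ‖deriv (deriv γ) s₁‖ = ‖deriv (deriv γ) s₂‖ := by
  intro s₁ s₂
  have hκ := sturm_liouville_equality_plane_curve_implies_constant_curvature_general L hL γ hper θ
    (hθ.of_le (mod_cast le_top)) htangent n hn hrot f (hf.of_le (mod_cast le_top)) hfper hfne heq
  rw [hκ, hκ]
end

section
/- Let γ : ℝ → ℝ³ be a simple closed spherical curve of length L, parametrized by arclength, with curvature κ(s) = ‖γ''(s)‖, and let A be the area (2-dimensional Hausdorff measure) of one of the two connected components of the complement of the image of γ in the unit sphere S². Then the first eigenvalue μ₁ of the two-dimensional periodic Schrödinger operator P_{A,L} = −(1 + A²/L²) ∂²/∂t² − 4 ∂²/∂s² − (4A/L) ∂²/∂t∂s + κ(s)² on [0, 2π] × [0, L] satisfies 4π²/L² ≤ μ₁; equivalently, for every smooth function f : ℝ² → ℝ that is 2π-periodic in t and L-periodic in s, ∫₀^{2π} ∫₀^L [ (1 + A²/L²) (∂f/∂t)²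 + 4 (∂f/∂s)² + (4A/L) (∂f/∂t)(∂f/∂s) + κ(s)² f² ] ds dt ≥ (4π²/L²) ∫₀^{2π} ∫₀^L f² ds dt. -/
open Real MeasureTheory

/-!
Completing the square with `c = A / (2 L)`, the quadratic form is
`∫∫ [f_t² + 4 (c f_t + f_s)² + κ² f²]`, and the term `f_t²` may be dropped. Put
`G(s) = ∫ f(t, s)² dt`. Periodicity in `t` gives `G' = 2 ∫ f (c f_t + f_s) dt`, so by Cauchy–Schwarz
`G'² ≤ 4 G ∫ (c f_t + f_s)² dt`: the integral over `t` dominates the form `∫ [4 u'² + κ² u²] ds`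
at `u = √G`. Now rotate the plane curve `(u, 0)` by a phase `φ` that is proportional to the
accumulated curvature and grows by `π` over a period. Both coordinates become antiperiodic, so
Wirtinger's inequality yields `(π / L)² ∫ u² ≤ ∫ [u'² + φ'² u²]`, and `φ'² ≤ κ² / 4` because the
total curvature of a closed curve is at least `2π` (Fenchel).
-/

lemma periodic_deriv_s5 {E : Type*} [NormedAddCommGroup E] [NormedSpace ℝ E] {g : ℝ → E} {L : ℝ}
    (hg : Function.Periodic g L) : Function.Periodic (deriv g) L := fun s => by
  rw [← deriv_comp_add_const, hg.funext]

lemma antiperiodic_deriv_s5 {E : Type*} [NormedAddCommGroup E] [NormedSpace ℝ E] {g : ℝ → E} {L : ℝ}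
    (hg : Function.Antiperiodic g L) : Function.Antiperiodic (deriv g) L := fun s => by
  rw [← deriv_comp_add_const, hg.funext, deriv.neg]

lemma hasDerivAt_tan_of_cos_ne_zero {z : ℝ} (hz : cos z ≠ 0) :
    HasDerivAt tan (1 + tan z ^ 2) z := by
  have h := hasDerivAt_tan hz
  rwa [← inv_one_add_tan_sq hz, one_div, inv_inv] at h

/-! ### Wirtinger inequalities -/

lemma integral_sub_sq_mul_sq_le_integral_deriv_sq {w q q' : ℝ → ℝ} {a b : ℝ} (hab : a ≤ b)
    (hw : ContDiff ℝ 1 w) (ha : w a = 0) (hb : w b = 0)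
    (hq : ∀ s ∈ Set.uIcc a b, HasDerivAt q (q' s) s) (hq' : ContinuousOn q' (Set.uIcc a b)) :
    ∫ s in a..b, (q' s - q s ^ 2) * w s ^ 2 ≤ ∫ s in a..b, deriv w s ^ 2 := by
  have hqc : ContinuousOn q (Set.uIcc a b) := fun s hs => (hq s hs).continuousAt.continuousWithinAt
  have hwc := hw.continuous
  have hexact : ∫ s in a..b, (q' s * w s ^ 2 + q s * (2 * w s * deriv w s)) = 0 := by
    rw [intervalIntegral.integral_eq_sub_of_hasDerivAt (f := fun s => q s * w s ^ 2)
      (fun s hs => ?_) (ContinuousOn.intervalIntegrable (by fun_prop)), ha, hb]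
    · simp
    · exact ((hq s hs).mul ((hw.differentiable_one s).hasDerivAt.pow 2)).congr_deriv (by simp)
  have hsquare : ∫ s in a..b, (deriv w s ^ 2 - (q' s - q s ^ 2) * w s ^ 2 +
      (q' s * w s ^ 2 + q s * (2 * w s * deriv w s))) = ∫ s in a..b, (deriv w s + q s * w s) ^ 2 :=
    intervalIntegral.integral_congr fun s _ => by ring
  rw [intervalIntegral.integral_add, intervalIntegral.integral_sub, hexact] at hsquare
  · have : 0 ≤ ∫ s in a..b, (deriv w s + q s * w s) ^ 2 :=
      intervalIntegral.integral_nonneg hab fun s _ => sq_nonneg _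
    linarith
  all_goals exact ContinuousOn.intervalIntegrable (by fun_prop)

-- Take `q s = μ tan (μ (s - (a + b) / 2))`, which satisfies `q' - q² = μ²`.
lemma sq_mul_integral_sq_le_integral_deriv_sq {w : ℝ → ℝ} {a b μ : ℝ} (hab : a ≤ b)
    (hw : ContDiff ℝ 1 w) (ha : w a = 0) (hb : w b = 0) (hμ : 0 ≤ μ) (hμπ : μ * (b - a) < π) :
    μ ^ 2 * ∫ s in a..b, w s ^ 2 ≤ ∫ s in a..b, deriv w s ^ 2 := by
  let θ : ℝ → ℝ := fun s => μ * (s - (a + b) / 2)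
  have hθ (s : ℝ) : HasDerivAt θ μ s := by
    simpa using ((hasDerivAt_id s).sub_const ((a + b) / 2)).const_mul μ
  have hcos (s : ℝ) (hs : s ∈ Set.uIcc a b) : cos (θ s) ≠ 0 := by
    rw [Set.uIcc_of_le hab] at hs
    have hlower := mul_nonneg hμ (sub_nonneg.2 hs.1)
    have hupper := mul_nonneg hμ (sub_nonneg.2 hs.2)
    exact (cos_pos_of_mem_Ioo ⟨by simp only [θ]; linarith, by simp only [θ]; linarith⟩).ne'
  have htan (s : ℝ) (hs : s ∈ Set.uIcc a b) :
      HasDerivAt (fun s => tan (θ s)) ((1 + tan (θ s) ^ 2) * μ) s :=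
    (hasDerivAt_tan_of_cos_ne_zero (hcos s hs)).comp s (hθ s)
  have htan_cont : ContinuousOn (fun s => tan (θ s)) (Set.uIcc a b) :=
    fun s hs => (htan s hs).continuousAt.continuousWithinAt
  calc μ ^ 2 * ∫ s in a..b, w s ^ 2
      = ∫ s in a..b, (μ * ((1 + tan (θ s) ^ 2) * μ) - (μ * tan (θ s)) ^ 2) * w s ^ 2 := by
        rw [← intervalIntegral.integral_const_mul]
        exact intervalIntegral.integral_congr fun s _ => by ring
    _ ≤ ∫ s in a..b, deriv w s ^ 2 :=
        integral_sub_sq_mul_sq_le_integral_deriv_sq hab hw ha hb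
          (fun s hs => (htan s hs).const_mul μ) (by fun_prop)

theorem wirtinger_dirichlet {w : ℝ → ℝ} {a b : ℝ} (hab : a < b) (hw : ContDiff ℝ 1 w)
    (ha : w a = 0) (hb : w b = 0) :
    (π / (b - a)) ^ 2 * ∫ s in a..b, w s ^ 2 ≤ ∫ s in a..b, deriv w s ^ 2 := by
  have hba : 0 < b - a := sub_pos.2 hab
  have hlim : Filter.Tendsto (fun μ : ℝ => μ ^ 2 * ∫ s in a..b, w s ^ 2)
      (nhdsWithin (π / (b - a)) (Set.Iio (π / (b - a))))
      (nhds ((π / (b - a)) ^ 2 * ∫ s in a..b, w s ^ 2)) :=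
    (Continuous.tendsto (by fun_prop) _).mono_left nhdsWithin_le_nhds
  refine le_of_tendsto hlim ?_
  filter_upwards [Ioo_mem_nhdsLT (div_pos pi_pos hba)] with μ hμ
  exact sq_mul_integral_sq_le_integral_deriv_sq hab.le hw ha hb hμ.1.le ((lt_div_iff₀ hba).1 hμ.2)

theorem wirtinger_antiperiodic {w : ℝ → ℝ} {L : ℝ} (hL : 0 < L) (hw : ContDiff ℝ 1 w)
    (hanti : Function.Antiperiodic w L) :
    (π / L) ^ 2 * ∫ s in 0..L, w s ^ 2 ≤ ∫ s in 0..L, deriv w s ^ 2 := by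
  obtain ⟨a, ha⟩ : (0 : ℝ) ∈ Set.range w := by
    have h0 := hanti 0
    rcases le_total (w 0) 0 with h | h
    · exact mem_range_of_exists_le_of_exists_ge hw.continuous ⟨0, h⟩ ⟨0 + L, by linarith⟩
    · exact mem_range_of_exists_le_of_exists_ge hw.continuous ⟨0 + L, by linarith⟩ ⟨0, h⟩
  have hsq {v : ℝ → ℝ} (hv : Function.Antiperiodic v L) :
      ∫ s in a..(a + L), v s ^ 2 = ∫ s in 0..L, v s ^ 2 := by
    have hv2 : Function.Periodic (fun s => v s ^ 2) L := fun s => by simp only [hv s, neg_sq]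
    simpa using hv2.intervalIntegral_add_eq a 0
  have hdir := wirtinger_dirichlet (lt_add_of_pos_right a hL) hw ha (by rw [hanti, ha, neg_zero])
  rwa [add_sub_cancel_left, hsq hanti, hsq (antiperiodic_deriv_s5 hanti)] at hdir

/-! ### One-dimensional Schrödinger operators with periodic potential -/

lemma integral_sq_le_of_phase {u φ : ℝ → ℝ} {L : ℝ} (hL : 0 < L) (hu : ContDiff ℝ 1 u)
    (hper : Function.Periodic u L) (hφ : ContDiff ℝ 1 φ) (hφL : ∀ s, φ (s + L) = φ s + π) :
    (π / L) ^ 2 * ∫ s in 0..L, u s ^ 2 ≤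
      ∫ s in 0..L, (deriv u s ^ 2 + deriv φ s ^ 2 * u s ^ 2) := by
  have hux (s : ℝ) := (hu.differentiable_one s).hasDerivAt
  have hφx (s : ℝ) := (hφ.differentiable_one s).hasDerivAt
  have hcos := wirtinger_antiperiodic hL (w := fun s => u s * cos (φ s)) (by fun_prop)
    fun s => by simp only [hper s, hφL, cos_add_pi, mul_neg]
  have hsin := wirtinger_antiperiodic hL (w := fun s => u s * sin (φ s)) (by fun_prop)
    fun s => by simp only [hper s, hφL, sin_add_pi, mul_neg]
  have hcos' (s : ℝ) : deriv (fun s => u s * cos (φ s)) s =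
      deriv u s * cos (φ s) + u s * (-sin (φ s) * deriv φ s) := ((hux s).mul (hφx s).cos).deriv
  have hsin' (s : ℝ) : deriv (fun s => u s * sin (φ s)) s =
      deriv u s * sin (φ s) + u s * (cos (φ s) * deriv φ s) := ((hux s).mul (hφx s).sin).deriv
  have hsq (s : ℝ) : (u s * cos (φ s)) ^ 2 + (u s * sin (φ s)) ^ 2 = u s ^ 2 := by
    linear_combination u s ^ 2 * sin_sq_add_cos_sq (φ s)
  have hderiv_sq (s : ℝ) : (deriv u s * cos (φ s) + u s * (-sin (φ s) * deriv φ s)) ^ 2 +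
      (deriv u s * sin (φ s) + u s * (cos (φ s) * deriv φ s)) ^ 2 =
      deriv u s ^ 2 + deriv φ s ^ 2 * u s ^ 2 := by
    linear_combination (deriv u s ^ 2 + deriv φ s ^ 2 * u s ^ 2) * sin_sq_add_cos_sq (φ s)
  simp only [hcos'] at hcos
  simp only [hsin'] at hsin
  have hsum := add_le_add hcos hsin
  rw [← mul_add, ← intervalIntegral.integral_add, ← intervalIntegral.integral_add] at hsum
  · simpa only [hsq, hderiv_sq] using hsum
  all_goals exact Continuous.intervalIntegrable (by fun_prop) _ _

lemma integral_sq_le_of_integral_ne_zero {u k : ℝ → ℝ} {L : ℝ} (hL : 0 < L)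
    (hu : ContDiff ℝ 1 u) (hper : Function.Periodic u L) (hk : Continuous k)
    (hkper : Function.Periodic k L) (hK : ∫ s in 0..L, k s ≠ 0) :
    (π / L) ^ 2 * ∫ s in 0..L, u s ^ 2 ≤
      ∫ s in 0..L, (deriv u s ^ 2 + (π / (∫ s in 0..L, k s) * k s) ^ 2 * u s ^ 2) := by
  set K := ∫ s in 0..L, k s with hKdef
  let φ : ℝ → ℝ := fun s => π / K * ∫ x in 0..s, k x
  have hφ (s : ℝ) : HasDerivAt φ (π / K * k s) s :=
    (hk.integral_hasStrictDerivAt 0 s).hasDerivAt.const_mul _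
  have hφ' : deriv φ = fun s => π / K * k s := funext fun s => (hφ s).deriv
  have hφ1 : ContDiff ℝ 1 φ :=
    contDiff_one_iff_deriv.2 ⟨fun s => (hφ s).differentiableAt, by rw [hφ']; fun_prop⟩
  have hφL (s : ℝ) : φ (s + L) = φ s + π := by
    simp only [φ, hkper.intervalIntegral_add_eq_add 0 s fun _ _ => hk.intervalIntegrable _ _,
      zero_add, ← hKdef, mul_add, div_mul_cancel₀ π hK]
  simpa only [hφ'] using integral_sq_le_of_phase hL hu hper hφ1 hφL

theorem periodic_schroedinger_lower_bound {u k : ℝ → ℝ} {L : ℝ} (hL : 0 < L)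
    (hu : ContDiff ℝ 1 u) (hper : Function.Periodic u L) (hk : Continuous k)
    (hkper : Function.Periodic k L) (hK : 2 * π ≤ ∫ s in 0..L, k s) :
    4 * π ^ 2 / L ^ 2 * ∫ s in 0..L, u s ^ 2 ≤
      ∫ s in 0..L, (4 * deriv u s ^ 2 + k s ^ 2 * u s ^ 2) := by
  have hK0 : 0 < ∫ s in 0..L, k s := lt_of_lt_of_le two_pi_pos hK
  set r := π / ∫ s in 0..L, k s with hr
  have hr0 : 0 ≤ r := by positivity
  have hr2 : r ≤ 1 / 2 := by rw [hr, div_le_iff₀ hK0]; linarith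
  have hr_sq : 4 * r ^ 2 ≤ 1 := by nlinarith
  calc 4 * π ^ 2 / L ^ 2 * ∫ s in 0..L, u s ^ 2
      = 4 * ((π / L) ^ 2 * ∫ s in 0..L, u s ^ 2) := by ring
    _ ≤ 4 * ∫ s in 0..L, (deriv u s ^ 2 + (r * k s) ^ 2 * u s ^ 2) := by
        gcongr
        exact integral_sq_le_of_integral_ne_zero hL hu hper hk hkper hK0.ne'
    _ = ∫ s in 0..L, 4 * (deriv u s ^ 2 + (r * k s) ^ 2 * u s ^ 2) := by
        rw [intervalIntegral.integral_const_mul]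
    _ ≤ ∫ s in 0..L, (4 * deriv u s ^ 2 + k s ^ 2 * u s ^ 2) := by
        refine intervalIntegral.integral_mono hL.le
          (Continuous.intervalIntegrable (by fun_prop) _ _)
          (Continuous.intervalIntegrable (by fun_prop) _ _) fun s => ?_
        have := mul_le_mul_of_nonneg_right hr_sq (sq_nonneg (k s * u s))
        dsimp only
        linarith

-- Test with `u = √(G + ε)`, for which `4 u'² = G'² / (G + ε) ≤ 4 H`.
lemma add_const_schroedinger_lower_bound {G H k : ℝ → ℝ} {L ε : ℝ} (hL : 0 < L)
    (hG : ContDiff ℝ 1 G) (hGper : Function.Periodic G L) (hG0 : 0 ≤ G)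
    (hH : Continuous H) (hH0 : 0 ≤ H) (hGH : ∀ s, deriv G s ^ 2 ≤ 4 * (G s * H s))
    (hk : Continuous k) (hkper : Function.Periodic k L) (hK : 2 * π ≤ ∫ s in 0..L, k s)
    (hε : 0 < ε) :
    4 * π ^ 2 / L ^ 2 * ∫ s in 0..L, (G s + ε) ≤
      ∫ s in 0..L, (4 * H s + k s ^ 2 * (G s + ε)) := by
  have hpos (s : ℝ) : 0 < G s + ε := add_pos_of_nonneg_of_pos (hG0 s) hε
  have hsq (s : ℝ) : √(G s + ε) ^ 2 = G s + ε := sq_sqrt (hpos s).le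
  have hu : ContDiff ℝ 1 fun s => √(G s + ε) :=
    (hG.add contDiff_const).sqrt fun s => (hpos s).ne'
  have hu' (s : ℝ) : 4 * deriv (fun s => √(G s + ε)) s ^ 2 ≤ 4 * H s := by
    rw [(((hG.differentiable_one s).hasDerivAt.add_const ε).sqrt (hpos s).ne').deriv,
      div_pow, mul_pow, hsq, mul_div_assoc', div_le_iff₀ (mul_pos (by norm_num) (hpos s))]
    linarith [hGH s, mul_nonneg (hH0 s) hε.le]
  have hbound := periodic_schroedinger_lower_bound hL hu
    (fun s => by simp only [hGper s]) hk hkper hK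
  simp only [hsq] at hbound
  exact hbound.trans <| intervalIntegral.integral_mono hL.le
    (Continuous.intervalIntegrable (by fun_prop) _ _)
    (Continuous.intervalIntegrable (by fun_prop) _ _) fun s => add_le_add_left (hu' s) _

theorem schroedinger_lower_bound_of_deriv_sq_le {G H k : ℝ → ℝ} {L : ℝ} (hL : 0 < L)
    (hG : ContDiff ℝ 1 G) (hGper : Function.Periodic G L) (hG0 : 0 ≤ G)
    (hH : Continuous H) (hH0 : 0 ≤ H) (hGH : ∀ s, deriv G s ^ 2 ≤ 4 * (G s * H s))
    (hk : Continuous k) (hkper : Function.Periodic k L) (hK : 2 * π ≤ ∫ s in 0..L, k s) :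
    4 * π ^ 2 / L ^ 2 * ∫ s in 0..L, G s ≤ ∫ s in 0..L, (4 * H s + k s ^ 2 * G s) := by
  have hcont {F : ℝ → ℝ → ℝ} (hF : Continuous (Function.uncurry F)) :
      Filter.Tendsto (fun ε => ∫ s in 0..L, F ε s) (nhdsWithin 0 (Set.Ioi 0))
        (nhds (∫ s in 0..L, F 0 s)) :=
    ((intervalIntegral.continuous_parametric_intervalIntegral_of_continuous' hF 0 L).tendsto
      0).mono_left nhdsWithin_le_nhds
  have hleft := (hcont (F := fun ε s => G s + ε) (by fun_prop)).const_mul (4 * π ^ 2 / L ^ 2)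
  have hright := hcont (F := fun ε s => 4 * H s + k s ^ 2 * (G s + ε)) (by fun_prop)
  simp only [add_zero] at hleft hright
  refine le_of_tendsto_of_tendsto hleft hright ?_
  filter_upwards [self_mem_nhdsWithin] with ε hε
  exact add_const_schroedinger_lower_bound hL hG hGper hG0 hH hH0 hGH hk hkper hK hε

/-! ### Fenchel's theorem -/

section Fenchel

open InnerProductGeometry

variable {E : Type*} [NormedAddCommGroup E] [InnerProductSpace ℝ E]

lemma inner_deriv_eq_zero_of_norm_eq_one {T : ℝ → E} (hT : Differentiable ℝ T)
    (hnorm : ∀ s, ‖T s‖ = 1) (s : ℝ) : inner ℝ (T s) (deriv T s) = 0 := by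
  have h := (hT s).hasDerivAt.norm_sq
  simp only [hnorm] at h
  simpa using h.unique (hasDerivAt_const s _)

lemma abs_inner_le_sqrt_mul_norm {x v : E} (p : E) (hx : ‖x‖ = 1) (hv : inner ℝ x v = 0) :
    |inner ℝ p v| ≤ √(‖p‖ ^ 2 - inner ℝ p x ^ 2) * ‖v‖ := by
  have hinner : inner ℝ p v = inner ℝ (p - inner ℝ p x • x) v := by
    rw [inner_sub_left, real_inner_smul_left, hv, mul_zero, sub_zero]
  have hnorm : ‖p - inner ℝ p x • x‖ ^ 2 = ‖p‖ ^ 2 - inner ℝ p x ^ 2 := by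
    rw [norm_sub_sq_real, real_inner_smul_right, norm_smul, hx, mul_one, norm_eq_abs, sq_abs]
    ring
  rw [hinner, ← hnorm, sqrt_sq (norm_nonneg _)]
  exact abs_real_inner_le_norm _ _

-- The strict bound on `‖p‖` keeps the inner products away from `±1`, where `arccos` is singular.
lemma arccos_inner_sub_arccos_inner_le {T : ℝ → E} {p : E} {a b : ℝ} (hab : a ≤ b)
    (hT : ContDiff ℝ 1 T) (hnorm : ∀ s, ‖T s‖ = 1) (hp : ‖p‖ < 1) :
    arccos (inner ℝ p (T b)) - arccos (inner ℝ p (T a)) ≤ ∫ s in a..b, ‖deriv T s‖ := by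
  have hlt (s : ℝ) : |inner ℝ p (T s)| < 1 :=
    (abs_real_inner_le_norm _ _).trans_lt (by rwa [hnorm, mul_one])
  have hderiv (s : ℝ) : HasDerivAt (fun s => arccos (inner ℝ p (T s)))
      (-(1 / √(1 - inner ℝ p (T s) ^ 2)) * inner ℝ p (deriv T s)) s := by
    have hinner := (hasDerivAt_const s p).inner ℝ (hT.differentiable_one s).hasDerivAt
    rw [inner_zero_left, add_zero] at hinner
    exact HasDerivAt.comp (h₂ := arccos) s
      (hasDerivAt_arccos (abs_lt.1 (hlt s)).1.ne' (abs_lt.1 (hlt s)).2.ne) hinner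
  refine intervalIntegral.sub_le_integral_of_hasDeriv_right_of_le hab
    (fun s _ => (hderiv s).continuousAt.continuousWithinAt) (fun s _ => (hderiv s).hasDerivWithinAt)
    hT.continuous_deriv_one.norm.continuousOn.integrableOn_Icc fun s _ => ?_
  have hsqrt : 0 < √(1 - inner ℝ p (T s) ^ 2) :=
    sqrt_pos.2 (sub_pos.2 ((sq_lt_one_iff_abs_lt_one _).2 (hlt s)))
  calc -(1 / √(1 - inner ℝ p (T s) ^ 2)) * inner ℝ p (deriv T s)
      = -inner ℝ p (deriv T s) / √(1 - inner ℝ p (T s) ^ 2) := by ring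
    _ ≤ ‖deriv T s‖ := by
        rw [div_le_iff₀' hsqrt]
        calc -inner ℝ p (deriv T s) ≤ |inner ℝ p (deriv T s)| := neg_le_abs _
          _ ≤ √(‖p‖ ^ 2 - inner ℝ p (T s) ^ 2) * ‖deriv T s‖ :=
              abs_inner_le_sqrt_mul_norm p (hnorm s)
                (inner_deriv_eq_zero_of_norm_eq_one hT.differentiable_one hnorm s)
          _ ≤ √(1 - inner ℝ p (T s) ^ 2) * ‖deriv T s‖ := by
              gcongr
              exact pow_le_one₀ (norm_nonneg p) hp.le

theorem angle_le_integral_norm_deriv {T : ℝ → E} {a b : ℝ} (hab : a ≤ b)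
    (hT : ContDiff ℝ 1 T) (hnorm : ∀ s, ‖T s‖ = 1) :
    angle (T a) (T b) ≤ ∫ s in a..b, ‖deriv T s‖ := by
  have hlim : Filter.Tendsto
      (fun μ : ℝ => arccos (inner ℝ (μ • T a) (T b)) - arccos (inner ℝ (μ • T a) (T a)))
      (nhdsWithin 1 (Set.Iio 1)) (nhds (angle (T a) (T b))) := by
    have hcont : Continuous fun μ : ℝ =>
        arccos (inner ℝ (μ • T a) (T b)) - arccos (inner ℝ (μ • T a) (T a)) := by fun_prop
    convert (hcont.tendsto 1).mono_left nhdsWithin_le_nhds using 2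
    simp [angle, hnorm]
  refine le_of_tendsto hlim ?_
  filter_upwards [Ioo_mem_nhdsLT zero_lt_one] with μ hμ
  exact arccos_inner_sub_arccos_inner_le hab hT hnorm
    (by rw [norm_smul, hnorm, mul_one, norm_of_nonneg hμ.1.le]; exact hμ.2)

lemma pi_le_angle_add_angle_of_inner_add_nonpos {x y z : E} (hyz : ‖y‖ = ‖z‖)
    (h : inner ℝ x (y + z) ≤ 0) : π ≤ angle x y + angle x z := by
  rw [inner_add_right] at h
  have hle : angle x (-z) ≤ angle x y := by
    refine antitone_arccos ?_
    rw [norm_neg, hyz, inner_neg_right]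
    gcongr
    linarith
  rw [angle_neg_right] at hle
  linarith

lemma inner_add_pos_of_integral_norm_deriv_lt_pi {T : ℝ → E} {a b : ℝ}
    (hT : ContDiff ℝ 1 T) (hnorm : ∀ s, ‖T s‖ = 1) (hlen : ∫ s in a..b, ‖deriv T s‖ < π)
    {s : ℝ} (hs : s ∈ Set.Icc a b) : 0 < inner ℝ (T s) (T a + T b) := by
  by_contra! hneg
  have hpi := pi_le_angle_add_angle_of_inner_add_nonpos ((hnorm a).trans (hnorm b).symm) hneg
  have hint (c d : ℝ) : IntervalIntegrable (fun s => ‖deriv T s‖) volume c d :=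
    hT.continuous_deriv_one.norm.intervalIntegrable c d
  have has := angle_le_integral_norm_deriv hs.1 hT hnorm
  have hsb := angle_le_integral_norm_deriv hs.2 hT hnorm
  rw [angle_comm] at has
  rw [← intervalIntegral.integral_add_adjacent_intervals (hint a s) (hint s b)] at hlen
  linarith

lemma exists_integral_eq_integral {k : ℝ → ℝ} {a b : ℝ} (hab : a ≤ b) (hk : Continuous k)
    (hk0 : 0 ≤ ∫ s in a..b, k s) :
    ∃ m ∈ Set.Icc a b, ∫ s in a..m, k s = ∫ s in m..b, k s := by
  have hint (c d : ℝ) : IntervalIntegrable k volume c d := hk.intervalIntegrable c d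
  have hcont := (intervalIntegral.continuous_primitive hint a).continuousOn (s := Set.Icc a b)
  obtain ⟨m, hm, hmk⟩ := intermediate_value_Icc hab hcont (show (∫ s in a..b, k s) / 2 ∈ _ by
    rw [intervalIntegral.integral_same]; constructor <;> linarith)
  refine ⟨m, hm, ?_⟩
  have hadd := intervalIntegral.integral_add_adjacent_intervals (hint a m) (hint m b)
  dsimp only at hmk
  linarith

theorem exists_forall_inner_pos_of_integral_norm_deriv_lt {T : ℝ → E} {a b : ℝ} (hab : a ≤ b)
    (hT : ContDiff ℝ 1 T) (hnorm : ∀ s, ‖T s‖ = 1) (hclosed : T a = T b)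
    (hlen : ∫ s in a..b, ‖deriv T s‖ < 2 * π) :
    ∃ p, ∀ s ∈ Set.Icc a b, 0 < inner ℝ (T s) p := by
  have hspeed := hT.continuous_deriv_one.norm
  obtain ⟨m, hm, hhalf⟩ := exists_integral_eq_integral hab hspeed
    (intervalIntegral.integral_nonneg hab fun s _ => norm_nonneg _)
  rw [← intervalIntegral.integral_add_adjacent_intervals (hspeed.intervalIntegrable a m)
    (hspeed.intervalIntegrable m b)] at hlen
  refine ⟨T a + T m, fun s hs => ?_⟩
  rcases le_total s m with h | h
  · exact inner_add_pos_of_integral_norm_deriv_lt_pi hT hnorm (by linarith) ⟨hs.1, h⟩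
  · rw [hclosed, add_comm]
    exact inner_add_pos_of_integral_norm_deriv_lt_pi hT hnorm (by linarith) ⟨h, hs.2⟩

theorem two_pi_le_integral_norm_deriv_deriv {γ : ℝ → E} {a b : ℝ} (hab : a < b)
    (hγ : ContDiff ℝ 2 γ) (hunit : ∀ s, ‖deriv γ s‖ = 1) (hclosed : γ a = γ b)
    (hclosed' : deriv γ a = deriv γ b) :
    2 * π ≤ ∫ s in a..b, ‖deriv (deriv γ) s‖ := by
  by_contra! hlt
  have hγ' : ContDiff ℝ 1 (deriv γ) := hγ.deriv'
  obtain ⟨p, hp⟩ :=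
    exists_forall_inner_pos_of_integral_norm_deriv_lt hab.le hγ' hunit hclosed' hlt
  have hcont : Continuous fun s => inner ℝ (deriv γ s) p := by fun_prop
  have hpos : 0 < ∫ s in a..b, inner ℝ (deriv γ s) p :=
    intervalIntegral.intervalIntegral_pos_of_pos_on (hcont.intervalIntegrable _ _)
      (fun s hs => hp s (Set.Ioo_subset_Icc_self hs)) hab
  have hzero := intervalIntegral.integral_eq_sub_of_hasDerivAt (f := fun s => inner ℝ (γ s) p)
    (fun s _ => by
      simpa using ((hγ.differentiable two_ne_zero) s).hasDerivAt.inner ℝ (hasDerivAt_const s p))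
    (hcont.intervalIntegrable a b)
  rw [hzero, hclosed, sub_self] at hpos
  exact hpos.false

end Fenchel

/-! ### Reduction from two variables to one -/

lemma intervalIntegral_swap_of_continuous {E : Type*} [NormedAddCommGroup E] [NormedSpace ℝ E]
    {F : ℝ → ℝ → E} (hF : Continuous (Function.uncurry F)) (a b c d : ℝ) :
    ∫ t in a..b, ∫ s in c..d, F t s = ∫ s in c..d, ∫ t in a..b, F t s :=
  intervalIntegral_intervalIntegral_swap <|
    (hF.continuousOn.integrableOn_compact (isCompact_uIcc.prod isCompact_uIcc)).mono_set
      (Set.prod_mono Set.uIoc_subset_uIcc Set.uIoc_subset_uIcc)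

lemma intervalIntegral_intervalIntegral_mono {F K : ℝ → ℝ → ℝ} {a b c d : ℝ} (hab : a ≤ b)
    (hcd : c ≤ d) (hF : Continuous (Function.uncurry F)) (hK : Continuous (Function.uncurry K))
    (hFK : ∀ t s, F t s ≤ K t s) :
    ∫ t in a..b, ∫ s in c..d, F t s ≤ ∫ t in a..b, ∫ s in c..d, K t s := by
  have hint {J : ℝ → ℝ → ℝ} (hJ : Continuous (Function.uncurry J)) :
      IntervalIntegrable (fun t => ∫ s in c..d, J t s) volume a b :=
    (intervalIntegral.continuous_parametric_intervalIntegral_of_continuous' hJ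
      c d).intervalIntegrable a b
  exact intervalIntegral.integral_mono hab (hint hF) (hint hK) fun t =>
    intervalIntegral.integral_mono hcd (hF.uncurry_left t |>.intervalIntegrable c d)
      (hK.uncurry_left t |>.intervalIntegrable c d) (hFK t)

lemma sq_intervalIntegral_mul_le {f h : ℝ → ℝ} {a b : ℝ} (hab : a ≤ b) (hf : Continuous f)
    (hh : Continuous h) :
    (∫ t in a..b, f t * h t) ^ 2 ≤ (∫ t in a..b, f t ^ 2) * ∫ t in a..b, h t ^ 2 := by
  have hquad (r : ℝ) : 0 ≤ (∫ t in a..b, f t ^ 2) * (r * r) +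
      2 * (∫ t in a..b, f t * h t) * r + ∫ t in a..b, h t ^ 2 := by
    calc 0 ≤ ∫ t in a..b, (r * f t + h t) ^ 2 :=
          intervalIntegral.integral_nonneg hab fun t _ => sq_nonneg _
      _ = ∫ t in a..b, (f t ^ 2 * (r * r) + f t * h t * (2 * r) + h t ^ 2) :=
          intervalIntegral.integral_congr fun t _ => by ring
      _ = _ := by
          rw [intervalIntegral.integral_add, intervalIntegral.integral_add,
            intervalIntegral.integral_mul_const, intervalIntegral.integral_mul_const]
          · ring
          all_goals exact Continuous.intervalIntegrable (by fun_prop) _ _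
  have hdiscrim := discrim_le_zero hquad
  rw [discrim] at hdiscrim
  linarith

lemma hasDerivAt_intervalIntegral_of_continuous {E : Type*} [NormedAddCommGroup E]
    [NormedSpace ℝ E] {F F' : ℝ → ℝ → E} (hF : ∀ s, Continuous (F s))
    (hF' : Continuous (Function.uncurry F'))
    (hderiv : ∀ s t, HasDerivAt (fun s => F s t) (F' s t) s) (a b s : ℝ) :
    HasDerivAt (fun s => ∫ t in a..b, F s t) (∫ t in a..b, F' s t) s := by
  obtain ⟨C, hC⟩ := ((isCompact_closedBall s 1).prod (isCompact_uIcc (a := a) (b := b)))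
    |>.exists_bound_of_continuousOn hF'.continuousOn
  exact (intervalIntegral.hasDerivAt_integral_of_dominated_loc_of_deriv_le (bound := fun _ => C)
    (Metric.closedBall_mem_nhds s one_pos)
    (.of_forall fun s => (hF s).aestronglyMeasurable) ((hF s).intervalIntegrable a b)
    (hF'.uncurry_left s).aestronglyMeasurable
    (.of_forall fun t ht x hx => hC (x, t) ⟨hx, Set.uIoc_subset_uIcc ht⟩)
    intervalIntegrable_const (.of_forall fun t _ x _ => hderiv x t)).2

section Slices

variable {g : ℝ × ℝ → ℝ} {P : ℝ}

lemma hasDerivAt_comp_prodMk_left (hg : Differentiable ℝ g) (t s : ℝ) :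
    HasDerivAt (fun t => g (t, s)) (fderiv ℝ g (t, s) (1, 0)) t :=
  (hg (t, s)).hasFDerivAt.comp_hasDerivAt t ((hasDerivAt_id t).prodMk (hasDerivAt_const t s))

lemma hasDerivAt_comp_prodMk_right (hg : Differentiable ℝ g) (t s : ℝ) :
    HasDerivAt (fun s => g (t, s)) (fderiv ℝ g (t, s) (0, 1)) s :=
  (hg (t, s)).hasFDerivAt.comp_hasDerivAt s ((hasDerivAt_const s t).prodMk (hasDerivAt_id s))

lemma fderiv_prodMk_one (p : ℝ × ℝ) (c : ℝ) :
    fderiv ℝ g p (c, 1) = c * fderiv ℝ g p (1, 0) + fderiv ℝ g p (0, 1) := by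
  rw [← smul_eq_mul, ← map_smul, ← map_add]
  simp

lemma intervalIntegral_mul_fderiv_eq_zero (hg : ContDiff ℝ 1 g)
    (hgP : ∀ t s, g (t + P, s) = g (t, s)) (s : ℝ) :
    ∫ t in 0..P, g (t, s) * fderiv ℝ g (t, s) (1, 0) = 0 := by
  rw [intervalIntegral.integral_eq_sub_of_hasDerivAt (f := fun t => g (t, s) ^ 2 / 2)
    (fun t _ => ?_) (Continuous.intervalIntegrable (by fun_prop) _ _)]
  · rw [← hgP 0 s, zero_add, sub_self]
  · exact (((hasDerivAt_comp_prodMk_left hg.differentiable_one t s).pow 2).div_const 2).congr_deriv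
      (by push_cast; ring)

lemma hasDerivAt_intervalIntegral_sq (hg : ContDiff ℝ 1 g)
    (hgP : ∀ t s, g (t + P, s) = g (t, s)) (c s : ℝ) :
    HasDerivAt (fun s => ∫ t in 0..P, g (t, s) ^ 2)
      (2 * ∫ t in 0..P, g (t, s) * fderiv ℝ g (t, s) (c, 1)) s := by
  have hsplit : ∫ t in 0..P, g (t, s) * fderiv ℝ g (t, s) (c, 1) =
      ∫ t in 0..P, g (t, s) * fderiv ℝ g (t, s) (0, 1) := by
    calc ∫ t in 0..P, g (t, s) * fderiv ℝ g (t, s) (c, 1)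
        = ∫ t in 0..P, (c * (g (t, s) * fderiv ℝ g (t, s) (1, 0)) +
            g (t, s) * fderiv ℝ g (t, s) (0, 1)) :=
          intervalIntegral.integral_congr fun t _ => by
            rw [fderiv_prodMk_one]
            ring
      _ = ∫ t in 0..P, g (t, s) * fderiv ℝ g (t, s) (0, 1) := by
          rw [intervalIntegral.integral_add, intervalIntegral.integral_const_mul,
            intervalIntegral_mul_fderiv_eq_zero hg hgP, mul_zero, zero_add]
          all_goals exact Continuous.intervalIntegrable (by fun_prop) _ _
  rw [hsplit, ← intervalIntegral.integral_const_mul]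
  refine hasDerivAt_intervalIntegral_of_continuous
    (F' := fun s t => 2 * (g (t, s) * fderiv ℝ g (t, s) (0, 1)))
    (by fun_prop) (by fun_prop) (fun s t => ?_) 0 P s
  exact ((hasDerivAt_comp_prodMk_right hg.differentiable_one t s).pow 2).congr_deriv
    (by push_cast; ring)

lemma contDiff_intervalIntegral_sq (hg : ContDiff ℝ 1 g)
    (hgP : ∀ t s, g (t + P, s) = g (t, s)) :
    ContDiff ℝ 1 fun s => ∫ t in 0..P, g (t, s) ^ 2 := by
  have hderiv (s : ℝ) := hasDerivAt_intervalIntegral_sq hg hgP 0 s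
  refine contDiff_one_iff_deriv.2 ⟨fun s => (hderiv s).differentiableAt, ?_⟩
  rw [funext fun s => (hderiv s).deriv]
  exact (intervalIntegral.continuous_parametric_intervalIntegral_of_continuous'
    (by fun_prop) 0 P).const_mul 2

lemma deriv_intervalIntegral_sq_sq_le (hP : 0 ≤ P) (hg : ContDiff ℝ 1 g)
    (hgP : ∀ t s, g (t + P, s) = g (t, s)) (c s : ℝ) :
    deriv (fun s => ∫ t in 0..P, g (t, s) ^ 2) s ^ 2 ≤
      4 * ((∫ t in 0..P, g (t, s) ^ 2) * ∫ t in 0..P, fderiv ℝ g (t, s) (c, 1) ^ 2) := by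
  rw [(hasDerivAt_intervalIntegral_sq hg hgP c s).deriv, mul_pow]
  norm_num only
  gcongr
  exact sq_intervalIntegral_mul_le hP (by fun_prop) (by fun_prop)

theorem schroedinger_lower_bound_fderiv (hP : 0 ≤ P) {L : ℝ} (hL : 0 < L)
    (hg : ContDiff ℝ 1 g) (hgP : ∀ t s, g (t + P, s) = g (t, s))
    (hgL : ∀ t s, g (t, s + L) = g (t, s)) (c : ℝ) {k : ℝ → ℝ} (hk : Continuous k)
    (hkper : Function.Periodic k L) (hK : 2 * π ≤ ∫ s in 0..L, k s) :
    4 * π ^ 2 / L ^ 2 * ∫ t in 0..P, ∫ s in 0..L, g (t, s) ^ 2 ≤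
      ∫ t in 0..P, ∫ s in 0..L, (4 * fderiv ℝ g (t, s) (c, 1) ^ 2 + k s ^ 2 * g (t, s) ^ 2) := by
  have hsplit (s : ℝ) :
      ∫ t in 0..P, (4 * fderiv ℝ g (t, s) (c, 1) ^ 2 + k s ^ 2 * g (t, s) ^ 2) =
        4 * (∫ t in 0..P, fderiv ℝ g (t, s) (c, 1) ^ 2) +
          k s ^ 2 * ∫ t in 0..P, g (t, s) ^ 2 := by
    rw [intervalIntegral.integral_add, intervalIntegral.integral_const_mul,
      intervalIntegral.integral_const_mul]
    all_goals exact Continuous.intervalIntegrable (by fun_prop) _ _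
  rw [intervalIntegral_swap_of_continuous (F := fun t s => g (t, s) ^ 2) (by fun_prop),
    intervalIntegral_swap_of_continuous
      (F := fun t s => 4 * fderiv ℝ g (t, s) (c, 1) ^ 2 + k s ^ 2 * g (t, s) ^ 2) (by fun_prop)]
  simp only [hsplit]
  exact schroedinger_lower_bound_of_deriv_sq_le hL (contDiff_intervalIntegral_sq hg hgP)
    (fun s => by simp only [hgL])
    (fun s => intervalIntegral.integral_nonneg hP fun t _ => sq_nonneg _)
    (intervalIntegral.continuous_parametric_intervalIntegral_of_continuous' (by fun_prop) 0 P)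
    (fun s => intervalIntegral.integral_nonneg hP fun t _ => sq_nonneg _)
    (deriv_intervalIntegral_sq_sq_le hP hg hgP c) hk hkper hK

end Slices

lemma four_mul_add_sq_le {L : ℝ} (hL : L ≠ 0) (A a b : ℝ) :
    4 * (A / (2 * L) * a + b) ^ 2 ≤
      (1 + A ^ 2 / L ^ 2) * a ^ 2 + 4 * b ^ 2 + 4 * A / L * a * b := by
  calc 4 * (A / (2 * L) * a + b) ^ 2 ≤ a ^ 2 + 4 * (A / (2 * L) * a + b) ^ 2 :=
        le_add_of_nonneg_left (sq_nonneg a)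
    _ = (1 + A ^ 2 / L ^ 2) * a ^ 2 + 4 * b ^ 2 + 4 * A / L * a * b := by
        field_simp
        ring

theorem schroedinger_operator_lower_bound_hopf_torus_general
    {E : Type*} [NormedAddCommGroup E] [InnerProductSpace ℝ E] {L P : ℝ} (hL : 0 < L)
    (hP : 0 ≤ P) {γ : ℝ → E} (hγ : ContDiff ℝ 2 γ) (hper : Function.Periodic γ L)
    (hunit : ∀ s, ‖deriv γ s‖ = 1) (A : ℝ) {f : ℝ → ℝ → ℝ}
    (hf : ContDiff ℝ 1 (Function.uncurry f)) (hfpert : ∀ t s, f (t + P) s = f t s)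
    (hfpers : ∀ t s, f t (s + L) = f t s) :
    4 * π ^ 2 / L ^ 2 * ∫ t in 0..P, ∫ s in 0..L, f t s ^ 2 ≤
      ∫ t in 0..P, ∫ s in 0..L,
        ((1 + A ^ 2 / L ^ 2) * deriv (fun t' => f t' s) t ^ 2
          + 4 * deriv (fun s' => f t s') s ^ 2
          + 4 * A / L * deriv (fun t' => f t' s) t * deriv (fun s' => f t s') s
          + ‖deriv (deriv γ) s‖ ^ 2 * f t s ^ 2) := by
  have hft (t s : ℝ) : deriv (fun t' => f t' s) t = fderiv ℝ (Function.uncurry f) (t, s) (1, 0) :=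
    (hasDerivAt_comp_prodMk_left hf.differentiable_one t s).deriv
  have hfs (t s : ℝ) : deriv (fun s' => f t s') s = fderiv ℝ (Function.uncurry f) (t, s) (0, 1) :=
    (hasDerivAt_comp_prodMk_right hf.differentiable_one t s).deriv
  have hκ : Continuous fun s => ‖deriv (deriv γ) s‖ := hγ.deriv'.continuous_deriv_one.norm
  have hκper : Function.Periodic (fun s => ‖deriv (deriv γ) s‖) L := fun s => by
    simp only [periodic_deriv_s5 (periodic_deriv_s5 hper) s]
  have hfenchel : 2 * π ≤ ∫ s in 0..L, ‖deriv (deriv γ) s‖ :=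
    two_pi_le_integral_norm_deriv_deriv hL hγ hunit hper.eq.symm (periodic_deriv_s5 hper).eq.symm
  refine (schroedinger_lower_bound_fderiv hP hL hf hfpert hfpers (A / (2 * L)) hκ hκper
    hfenchel).trans <| intervalIntegral_intervalIntegral_mono hP hL.le ?_ ?_ fun t s => ?_
  · fun_prop
  · simp only [hft, hfs]
    fun_prop
  · rw [hft, hfs, fderiv_prodMk_one]
    exact add_le_add_left (four_mul_add_sq_le hL.ne' _ _ _) _

/-- **Theorem 2.** Let `γ` be a simple closed curve of length `L` on the unit sphere
`S² ⊂ ℝ³`, with curvature `κ(s) = ‖γ''(s)‖`, bounding a region of area `A` (the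
2-dimensional Hausdorff measure of a connected component of the complement of the curve in
the sphere). Then the first eigenvalue of the two-dimensional periodic Schrödinger operator
`P_{A,L} = -(1 + A²/L²) ∂²/∂t² - 4 ∂²/∂s² - (4A/L) ∂²/∂t∂s + κ(s)²` on `[0,2π] × [0,L]`
is at least `4π²/L²`: every smooth doubly periodic test function `f` satisfies the
Rayleigh-quotient inequality for the associated quadratic form. -/
theorem schroedinger_operator_lower_bound_hopf_torus
    (L : ℝ) (hL : 0 < L) (γ : ℝ → EuclideanSpace ℝ (Fin 3))
    (hγ : ContDiff ℝ (⊤ : ℕ∞) γ)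
    (hper : ∀ s : ℝ, γ (s + L) = γ s)
    (hunit : ∀ s : ℝ, ‖deriv γ s‖ = 1)
    (hsph : ∀ s : ℝ, ‖γ s‖ = 1)
    (hsimple : Set.InjOn γ (Set.Ico 0 L))
    (x : EuclideanSpace ℝ (Fin 3))
    (hx : x ∈ Metric.sphere (0 : EuclideanSpace ℝ (Fin 3)) 1 \ Set.range γ)
    (A : ℝ)
    (hA : A = (μH[2]
      (connectedComponentIn (Metric.sphere (0 : EuclideanSpace ℝ (Fin 3)) 1 \ Set.range γ) x)).toReal)
    (f : ℝ → ℝ → ℝ) (hf : ContDiff ℝ (⊤ : ℕ∞) (Function.uncurry f))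
    (hfpert : ∀ t s : ℝ, f (t + 2 * π) s = f t s)
    (hfpers : ∀ t s : ℝ, f t (s + L) = f t s) :
    (∫ t in (0:ℝ)..(2 * π), ∫ s in (0:ℝ)..L,
        ((1 + A^2 / L^2) * (deriv (fun t' => f t' s) t)^2
          + 4 * (deriv (fun s' => f t s') s)^2
          + (4 * A / L) * (deriv (fun t' => f t' s) t) * (deriv (fun s' => f t s') s)
          + ‖deriv (deriv γ) s‖^2 * (f t s)^2))
      ≥ (4 * π^2 / L^2) * ∫ t in (0:ℝ)..(2 * π), ∫ s in (0:ℝ)..L, (f t s)^2 :=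
  schroedinger_operator_lower_bound_hopf_torus_general hL two_pi_pos.le
    (contDiff_infty.1 hγ 2) hper hunit A (contDiff_infty.1 hf 1) hfpert hfpers
end
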